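/- arXiv:0805.4125 — 2 statements merged into one kernel-verified Lean document; each statement's English description precedes it below -/
import Mathlib

section
/- Let W ⊂ ℝ^N × ℝ be an open set and let v, h ∈ L¹_loc(W) (with a fixed Borel measurable representative of v) be such that −∂_t v + Δv ≥ h in the sense of distributions on W, i.e., for every nonnegative φ ∈ C_c^∞(W) one has ∫_W v (∂_t φ + Δφ) dx dt ≥ ∫_W h φ dx dt, where Δ denotes the Laplacian in the space variable x ∈ ℝ^N. Then −∂_t v⁺ + Δ v⁺ ≥ χ_{[v ≥ 0]} h in the sense of distributions on W, i.e., for every nonnegative φ ∈ C_c^∞(W), ∫_W v⁺ (∂_t φ + Δφ) dx dt ≥ ∫_W χ_{[v ≥ 0]} h φ dx dt, where v⁺ = max(v, 0) and χ_{[v ≥ 0]} is the indicator function of the set {(x,t) ∈ W : v(x,t) ≥ 0}. -/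
open MeasureTheory Set Filter Topology
open scoped ENNReal NNReal

noncomputable section

/-- Euclidean space `ℝ^N`. -/
abbrev Euc (N : ℕ) : Type := EuclideanSpace ℝ (Fin N)

/-- `ρ(x) = dist(x, ∂Ω)`, realized as the distance from `x` to the complement of `Ω`. -/
def rho {N : ℕ} (Ω : Set (Euc N)) (x : Euc N) : ℝ := Metric.infDist x Ωᶜ

/-- The Laplacian (in the space variable) of `f : ℝ^N → ℝ`. -/
def lap {N : ℕ} (f : Euc N → ℝ) (x : Euc N) : ℝ :=
  ∑ i : Fin N, fderiv ℝ (fun y => fderiv ℝ f y (EuclideanSpace.single i 1)) x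
    (EuclideanSpace.single i 1)

/-- The parabolic cylinder `Q_T = Ω × (0,T)`. -/
def QT {N : ℕ} (Ω : Set (Euc N)) (T : ℝ) : Set (Euc N × ℝ) := Ω ×ˢ Ioo 0 T

/-- `∂_t ζ + Δ ζ` for a function `ζ(x,t)` (curried). -/
def heatAdj {N : ℕ} (ζ : Euc N → ℝ → ℝ) (p : Euc N × ℝ) : ℝ :=
  deriv (ζ p.1) p.2 + lap (fun y => ζ y p.2) p.1

/-- `C^{2,1}` regularity: `ζ`, `∂_t ζ`, `∇_x ζ` and `D²_x ζ` exist and are continuous. -/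
def C21 {N : ℕ} (ζ : Euc N → ℝ → ℝ) : Prop :=
  Continuous (fun p : Euc N × ℝ => ζ p.1 p.2) ∧
  (∀ (x : Euc N) (t : ℝ), DifferentiableAt ℝ (ζ x) t) ∧
  Continuous (fun p : Euc N × ℝ => deriv (ζ p.1) p.2) ∧
  (∀ (t : ℝ) (x : Euc N), DifferentiableAt ℝ (fun y => ζ y t) x) ∧
  Continuous (fun p : Euc N × ℝ => fderiv ℝ (fun y => ζ y p.2) p.1) ∧
  (∀ (t : ℝ) (x : Euc N), DifferentiableAt ℝ (fun y => fderiv ℝ (fun z => ζ z t) y) x) ∧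
  Continuous (fun p : Euc N × ℝ => fderiv ℝ (fun y => fderiv ℝ (fun z => ζ z p.2) y) p.1)

/-- Membership in `C^{2,1}_{ℓ,0}(Q̄_T)` : `C^{2,1}` regularity together with
vanishing on `∂Ω × [0,T] ∪ Ω̄ × {T}`. -/
def TestZero {N : ℕ} (Ω : Set (Euc N)) (T : ℝ) (ζ : Euc N → ℝ → ℝ) : Prop :=
  C21 ζ ∧ (∀ x ∈ frontier Ω, ∀ t ∈ Icc (0:ℝ) T, ζ x t = 0) ∧
  (∀ x ∈ closure Ω, ζ x T = 0)

/-- `g : ℝ → ℝ` continuous, nondecreasing and vanishing on `(-∞,0]`. -/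
def GoodG (g : ℝ → ℝ) : Prop := Continuous g ∧ Monotone g ∧ ∀ r : ℝ, r ≤ 0 → g r = 0

/-- `μ ∈ M¹₊(Ω)` : a positive Radon measure on `Ω` with `∫_Ω ρ dμ < ∞`. -/
def MemM1 {N : ℕ} (Ω : Set (Euc N)) (μ : Measure (Euc N)) : Prop :=
  μ Ωᶜ = 0 ∧ (∀ K : Set (Euc N), K ⊆ Ω → IsCompact K → μ K < ⊤) ∧
  (∫⁻ x, ENNReal.ofReal (rho Ω x) ∂μ) < ⊤

/-- A positive Radon measure on the (open) set `U`. -/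
def RadonOn {N : ℕ} (U : Set (Euc N)) (ν : Measure (Euc N)) : Prop :=
  ν Uᶜ = 0 ∧ ∀ K : Set (Euc N), K ⊆ U → IsCompact K → ν K < ⊤

/-- Weak solution of `(P_μ)` : `∂_t u - Δu + g(u) = 0` in `Q_T`, `u = 0` on
`∂Ω × (0,T)`, `u(·,0) = μ`. -/
def WeakSol {N : ℕ} (Ω : Set (Euc N)) (T : ℝ) (g : ℝ → ℝ) (μ : Measure (Euc N))
    (u : Euc N × ℝ → ℝ) : Prop :=
  IntegrableOn u (QT Ω T) ∧
  IntegrableOn (fun p => g (u p) * rho Ω p.1) (QT Ω T) ∧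
  ∀ ζ : Euc N → ℝ → ℝ, TestZero Ω T ζ →
    (∫ p in QT Ω T,
      (-(u p) * deriv (ζ p.1) p.2 - u p * lap (fun y => ζ y p.2) p.1 + ζ p.1 p.2 * g (u p)))
      = ∫ x, ζ x 0 ∂μ

/-- Weak subsolution of `(P_μ)`. -/
def WeakSubSol {N : ℕ} (Ω : Set (Euc N)) (T : ℝ) (g : ℝ → ℝ) (μ : Measure (Euc N))
    (u : Euc N × ℝ → ℝ) : Prop :=
  IntegrableOn u (QT Ω T) ∧
  IntegrableOn (fun p => g (u p) * rho Ω p.1) (QT Ω T) ∧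
  ∀ ζ : Euc N → ℝ → ℝ, TestZero Ω T ζ → (∀ x t, 0 ≤ ζ x t) →
    (∫ p in QT Ω T,
      (-(u p) * deriv (ζ p.1) p.2 - u p * lap (fun y => ζ y p.2) p.1 + ζ p.1 p.2 * g (u p)))
      ≤ ∫ x, ζ x 0 ∂μ

/-- `μ` is a good measure relative to `g` : `(P_μ)` admits a weak solution. -/
def GoodMeasure {N : ℕ} (Ω : Set (Euc N)) (T : ℝ) (g : ℝ → ℝ) (μ : Measure (Euc N)) : Prop :=
  ∃ u, WeakSol Ω T g μ u

/-- Essential limit of `F(t)` as `t → 0⁺` equals `L`. -/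
def EssLimInit (F : ℝ → ℝ) (L : ℝ) : Prop :=
  Tendsto F ((𝓝[>] (0:ℝ)) ⊓ (ae (volume : Measure ℝ))) (𝓝 L)

/-- Essential limit of `F(t)` as `t → 0⁺` is `+∞`. -/
def EssLimInitTop (F : ℝ → ℝ) : Prop :=
  Tendsto F ((𝓝[>] (0:ℝ)) ⊓ (ae (volume : Measure ℝ))) atTop

/-- `ν` is the initial trace of `u` on `U ⊆ Ω` : for every `φ ∈ C_c(U)`,
`ess lim_{t→0} ∫_Ω u(·,t) φ dx = ∫ φ dν`. -/
def InitTraceOn {N : ℕ} (Ω U : Set (Euc N)) (u : Euc N × ℝ → ℝ) (ν : Measure (Euc N)) : Prop :=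
  ∀ φ : Euc N → ℝ, Continuous φ → HasCompactSupport φ → tsupport φ ⊆ U →
    EssLimInit (fun t => ∫ x in Ω, u (x, t) * φ x) (∫ x, φ x ∂ν)

/-- `μstar` is the reduced measure of `μ` : the largest good measure `≤ μ`. -/
def IsReducedMeasure {N : ℕ} (Ω : Set (Euc N)) (T : ℝ) (g : ℝ → ℝ)
    (μ μstar : Measure (Euc N)) : Prop :=
  MemM1 Ω μstar ∧ μstar ≤ μ ∧ GoodMeasure Ω T g μstar ∧
  ∀ ν : Measure (Euc N), MemM1 Ω ν → GoodMeasure Ω T g ν → ν ≤ μ → ν ≤ μstar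

/-- The `N`-dimensional Hausdorff measure on `ℝ^N`. -/
def hausN {N : ℕ} : Measure (Euc N) := MeasureTheory.Measure.hausdorffMeasure (N : ℝ)

/-!
Write `L = ∂_b + ∑ i, ∂_{e i}²`. Mollification turns the weak inequality `L f ≥ h` into the
pointwise one `L (ρ ⋆ f) ≥ ρ ⋆ h`. For `Φ` convex and nondecreasing, the chain rule
`L (Φ ∘ u) = Φ'(u) L u + Φ''(u) ∑ i, (∂_{e i} u)²` then gives
`L (Φ ∘ (ρ ⋆ f)) ≥ Φ'(ρ ⋆ f) (ρ ⋆ h)`, and for Lipschitz `Φ` this passes to the `L¹_loc` limit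
`L (Φ ∘ f) ≥ Φ'(f) h`. Letting `Φ` tend to `r ↦ max r 0` while keeping `Φ' = 1` on `[0, ∞)` yields
`L f⁺ ≥ χ_{f ≥ 0} h`.
-/

open ContinuousLinearMap (lsmul)
open scoped Convolution

section L1Convergence

variable {α E F : Type*} [MeasurableSpace α] {μ : Measure α}
  [NormedAddCommGroup E] [NormedAddCommGroup F]

lemma integrable_comp_of_lipschitzWith [IsFiniteMeasure μ] {C : ℝ≥0} {Φ : E → F}
    (hΦ : LipschitzWith C Φ) {f : α → E} (hf : Integrable f μ) :
    Integrable (fun x => Φ (f x)) μ := by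
  refine ((hf.norm.const_mul (C : ℝ)).add (integrable_const ‖Φ 0‖)).mono'
    (hΦ.continuous.comp_aestronglyMeasurable hf.aestronglyMeasurable) (.of_forall fun x => ?_)
  have hdist : ‖Φ (f x) - Φ 0‖ ≤ C * ‖f x‖ := by simpa using hΦ.norm_sub_le (f x) 0
  exact (norm_le_norm_sub_add (Φ (f x)) (Φ 0)).trans (add_le_add_left hdist _)

lemma tendsto_lintegral_enorm_sub_comp_lipschitz {ι : Type*} {l : Filter ι} {C : ℝ≥0}
    {Φ : E → F} (hΦ : LipschitzWith C Φ) {u : ι → α → E} {u₀ : α → E}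
    (hu : Tendsto (fun i => ∫⁻ x, ‖u i x - u₀ x‖ₑ ∂μ) l (𝓝 0)) :
    Tendsto (fun i => ∫⁻ x, ‖Φ (u i x) - Φ (u₀ x)‖ₑ ∂μ) l (𝓝 0) := by
  have hbound : Tendsto (fun i => C * ∫⁻ x, ‖u i x - u₀ x‖ₑ ∂μ) l (𝓝 0) := by
    simpa using ENNReal.Tendsto.const_mul hu (Or.inr ENNReal.coe_ne_top)
  refine tendsto_of_tendsto_of_tendsto_of_le_of_le tendsto_const_nhds hbound
    (fun _ => zero_le) fun i => ?_
  rw [← lintegral_const_mul' _ _ ENNReal.coe_ne_top]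
  exact lintegral_mono fun x => by simpa [edist_eq_enorm_sub] using hΦ (u i x) (u₀ x)

lemma tendsto_lintegral_enorm_sub_smul [NormedSpace ℝ E] {c : ℕ → α → ℝ} {c₀ : α → ℝ}
    {u : ℕ → α → E} {u₀ : α → E} {C : ℝ≥0} (hcm : ∀ n, AEStronglyMeasurable (c n) μ)
    (hcC : ∀ n x, ‖c n x‖₊ ≤ C) (hc : ∀ᵐ x ∂μ, Tendsto (fun n => c n x) atTop (𝓝 (c₀ x)))
    (hu₀ : Integrable u₀ μ) (hu : Tendsto (fun n => ∫⁻ x, ‖u n x - u₀ x‖ₑ ∂μ) atTop (𝓝 0)) :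
    Tendsto (fun n => ∫⁻ x, ‖c n x • u n x - c₀ x • u₀ x‖ₑ ∂μ) atTop (𝓝 0) := by
  have hfixed : Tendsto (fun n => ∫⁻ x, ‖c n x • u₀ x - c₀ x • u₀ x‖ₑ ∂μ) atTop (𝓝 0) := by
    simp_rw [← ofReal_norm]
    refine tendsto_lintegral_norm_of_dominated_convergence (bound := fun x => C * ‖u₀ x‖)
      (fun n => (hcm n).smul hu₀.aestronglyMeasurable)
      (hu₀.norm.const_mul _).hasFiniteIntegral (fun n => .of_forall fun x => ?_)
      (hc.mono fun x hx => hx.smul_const _)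
    rw [norm_smul]
    exact mul_le_mul_of_nonneg_right (hcC n x) (norm_nonneg _)
  have hbound : Tendsto (fun n => C * (∫⁻ x, ‖u n x - u₀ x‖ₑ ∂μ) +
      ∫⁻ x, ‖c n x • u₀ x - c₀ x • u₀ x‖ₑ ∂μ) atTop (𝓝 0) := by
    simpa using (ENNReal.Tendsto.const_mul hu (Or.inr ENNReal.coe_ne_top)).add hfixed
  have hc₀m : AEStronglyMeasurable c₀ μ := aestronglyMeasurable_of_tendsto_ae _ hcm hc
  have hmeas : ∀ n, AEMeasurable (fun x => ‖c n x • u₀ x - c₀ x • u₀ x‖ₑ) μ := fun n =>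
    (((hcm n).smul hu₀.aestronglyMeasurable).sub (hc₀m.smul hu₀.aestronglyMeasurable)).enorm
  refine tendsto_of_tendsto_of_tendsto_of_le_of_le tendsto_const_nhds hbound
    (fun _ => zero_le) fun n => ?_
  rw [← lintegral_const_mul' _ _ ENNReal.coe_ne_top, ← lintegral_add_right' _ (hmeas n)]
  refine lintegral_mono fun x => ?_
  calc ‖c n x • u n x - c₀ x • u₀ x‖ₑ
      = ‖c n x • (u n x - u₀ x) + (c n x • u₀ x - c₀ x • u₀ x)‖ₑ := by
        rw [smul_sub, sub_add_sub_cancel]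
    _ ≤ ‖c n x • (u n x - u₀ x)‖ₑ + ‖c n x • u₀ x - c₀ x • u₀ x‖ₑ := enorm_add_le _ _
    _ ≤ C * ‖u n x - u₀ x‖ₑ + ‖c n x • u₀ x - c₀ x • u₀ x‖ₑ := by
        rw [enorm_smul]
        gcongr
        exact ENNReal.coe_le_coe.2 (hcC n x)

/- With `w n = ‖u n - u₀‖ - g n + g₀`, one has `∫ ‖u n - u₀‖ ≤ ∫ (w n)⁺ + (∫ g n - ∫ g₀)`, and
`(w n)⁺` tends to `0` under the fixed bound `‖u₀‖ + g₀`. -/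
lemma tendsto_lintegral_enorm_sub_of_generalized_dominated_convergence
    {u : ℕ → α → E} {u₀ : α → E} {g : ℕ → α → ℝ} {g₀ : α → ℝ}
    (hu : ∀ n, Integrable (u n) μ) (hu₀ : Integrable u₀ μ)
    (hg : ∀ n, Integrable (g n) μ) (hg₀ : Integrable g₀ μ) (hug : ∀ n x, ‖u n x‖ ≤ g n x)
    (hu_lim : ∀ᵐ x ∂μ, Tendsto (fun n => u n x) atTop (𝓝 (u₀ x)))
    (hg_lim : ∀ᵐ x ∂μ, Tendsto (fun n => g n x) atTop (𝓝 (g₀ x)))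
    (hg_int : Tendsto (fun n => ∫ x, g n x ∂μ) atTop (𝓝 (∫ x, g₀ x ∂μ))) :
    Tendsto (fun n => ∫⁻ x, ‖u n x - u₀ x‖ₑ ∂μ) atTop (𝓝 0) := by
  set w : ℕ → α → ℝ := fun n x => ‖u n x - u₀ x‖ - g n x + g₀ x with hw
  have hd_int : ∀ n, Integrable (fun x => ‖u n x - u₀ x‖) μ := fun n => ((hu n).sub hu₀).norm
  have hw_int : ∀ n, Integrable (w n) μ := fun n => ((hd_int n).sub (hg n)).add hg₀
  have hw_pos : Tendsto (fun n => ∫ x, max (w n x) 0 ∂μ) atTop (𝓝 (∫ _, (0 : ℝ) ∂μ)) := by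
    refine tendsto_integral_of_dominated_convergence (fun x => ‖u₀ x‖ + |g₀ x|)
      (fun n => (hw_int n).pos_part.aestronglyMeasurable) (hu₀.norm.add hg₀.abs)
      (fun n => .of_forall fun x => ?_) ?_
    · rw [Real.norm_of_nonneg (le_max_right _ _)]
      refine max_le ?_ (by positivity)
      linarith [norm_sub_le (u n x) (u₀ x), hug n x, le_abs_self (g₀ x)]
    · filter_upwards [hu_lim, hg_lim] with x hux hgx
      simpa [hw] using ((((hux.sub_const (u₀ x)).norm.sub hgx).add_const (g₀ x)).max
        (tendsto_const_nhds (x := (0 : ℝ))))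
  have hbound : Tendsto (fun n => ∫ x, max (w n x) 0 ∂μ + (∫ x, g n x ∂μ - ∫ x, g₀ x ∂μ))
      atTop (𝓝 0) := by
    simpa using hw_pos.add (hg_int.sub_const (∫ x, g₀ x ∂μ))
  have hnorm : Tendsto (fun n => ∫ x, ‖u n x - u₀ x‖ ∂μ) atTop (𝓝 0) := by
    refine squeeze_zero (fun n => integral_nonneg fun x => norm_nonneg _) (fun n => ?_) hbound
    have hg_sub : Integrable (fun x => g n x - g₀ x) μ := (hg n).sub hg₀
    rw [← integral_sub (hg n) hg₀, ← integral_add (hw_int n).pos_part hg_sub]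
    refine integral_mono (hd_int n) ((hw_int n).pos_part.add hg_sub) fun x => ?_
    beta_reduce
    linarith [le_max_left (w n x) 0]
  rw [← ENNReal.ofReal_zero]
  exact (ENNReal.tendsto_ofReal hnorm).congr fun n =>
    ofReal_integral_norm_eq_lintegral_enorm ((hu n).sub hu₀)

lemma tendsto_integral_mul_of_tendsto_lintegral_enorm_sub {u : ℕ → α → ℝ} {u₀ ψ : α → ℝ}
    {C : ℝ≥0} (hu : ∀ᶠ n in atTop, Integrable (u n) μ) (hu₀ : Integrable u₀ μ)
    (hu_lim : Tendsto (fun n => ∫⁻ x, ‖u n x - u₀ x‖ₑ ∂μ) atTop (𝓝 0))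
    (hψ : AEStronglyMeasurable ψ μ) (hψC : ∀ x, ‖ψ x‖₊ ≤ C) :
    Tendsto (fun n => ∫ x, u n x * ψ x ∂μ) atTop (𝓝 (∫ x, u₀ x * ψ x ∂μ)) := by
  simp_rw [mul_comm _ (ψ _)]
  exact tendsto_integral_of_L1 _ (hψ.mul hu₀.aestronglyMeasurable)
    (hu.mono fun n hn => hn.bdd_mul hψ (.of_forall hψC))
    (tendsto_lintegral_enorm_sub_smul (fun _ => hψ) (fun _ => hψC)
      (.of_forall fun _ => tendsto_const_nhds) hu₀ hu_lim)

end L1Convergence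

section Mollification

lemma exists_seq_contDiffBump_rOut_tendsto_zero {G : Type*} (c : G) :
    ∃ B : ℕ → ContDiffBump c, Tendsto (fun n => (B n).rOut) atTop (𝓝 0) ∧
      ∀ n, (B n).rOut ≤ 2 * (B n).rIn :=
  ⟨fun n => ⟨1 / ((n : ℝ) + 1) / 2, 1 / ((n : ℝ) + 1), by positivity,
      half_lt_self (by positivity)⟩,
    tendsto_one_div_add_atTop_nhds_zero_nat, fun n => (mul_div_cancel₀ _ two_ne_zero).ge⟩

variable {G : Type*} [NormedAddCommGroup G] [MeasurableSpace G] {μ : Measure G}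

lemma norm_convolution_le_convolution_norm {E : Type*} [NormedAddCommGroup E] [NormedSpace ℝ E]
    {ρ : G → ℝ} (hρ : ∀ q, 0 ≤ ρ q) (f : G → E) (p : G) :
    ‖(ρ ⋆[lsmul ℝ ℝ, μ] f) p‖ ≤ (ρ ⋆[lsmul ℝ ℝ, μ] fun q => ‖f q‖) p := by
  refine (norm_integral_le_integral_norm _).trans_eq (integral_congr_ae (.of_forall fun q => ?_))
  simp [norm_smul, abs_of_nonneg (hρ q)]

variable [NormedSpace ℝ G] [FiniteDimensional ℝ G] [BorelSpace G] [μ.IsAddHaarMeasure]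

lemma tendsto_lintegral_enorm_convolution_normed_sub {E : Type*} [NormedAddCommGroup E]
    [NormedSpace ℝ E] [CompleteSpace E] {f : G → E} (hf : Integrable f μ)
    {B : ℕ → ContDiffBump (0 : G)} {K : ℝ} (hB : Tendsto (fun n => (B n).rOut) atTop (𝓝 0))
    (hBK : ∀ n, (B n).rOut ≤ K * (B n).rIn) :
    Tendsto (fun n => ∫⁻ p, ‖((B n).normed μ ⋆[lsmul ℝ ℝ, μ] f) p - f p‖ₑ ∂μ) atTop (𝓝 0) := by
  have hmass : ∀ n, ∫ p, ((B n).normed μ ⋆[lsmul ℝ ℝ, μ] fun q => ‖f q‖) p ∂μ = ∫ p, ‖f p‖ ∂μ :=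
    fun n => by simp [integral_convolution _ (B n).integrable_normed hf.norm, (B n).integral_normed]
  exact tendsto_lintegral_enorm_sub_of_generalized_dominated_convergence
    (fun n => (B n).integrable_normed.integrable_convolution _ hf) hf
    (fun n => (B n).integrable_normed.integrable_convolution _ hf.norm) hf.norm
    (fun n => norm_convolution_le_convolution_norm (B n).nonneg_normed f)
    (ContDiffBump.ae_convolution_tendsto_right_of_locallyIntegrable hB (.of_forall hBK)
      hf.locallyIntegrable)
    (ContDiffBump.ae_convolution_tendsto_right_of_locallyIntegrable hB (.of_forall hBK)
      hf.norm.locallyIntegrable)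
    (by simp only [hmass, tendsto_const_nhds])

lemma fderiv_convolution_lsmul_apply {f ρ : G → ℝ} (hf : LocallyIntegrable f μ)
    (hρ : ContDiff ℝ 1 ρ) (hρc : HasCompactSupport ρ) (p w : G) :
    fderiv ℝ (ρ ⋆[lsmul ℝ ℝ, μ] f) p w = ((fun q => fderiv ℝ ρ q w) ⋆[lsmul ℝ ℝ, μ] f) p := by
  have hflip : (lsmul ℝ ℝ : ℝ →L[ℝ] ℝ →L[ℝ] ℝ).flip = lsmul ℝ ℝ := by
    ext; simp
  rw [← convolution_flip, hflip, (hρc.hasFDerivAt_convolution_right _ hf hρ p).fderiv,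
    convolution_precompR_apply _ hf (hρc.fderiv ℝ) (hρ.continuous_fderiv one_ne_zero),
    ← convolution_flip, hflip]

end Mollification

section DiffusionOp

variable {G ι : Type*} [NormedAddCommGroup G] [NormedSpace ℝ G]

lemma contDiff_fderiv_apply_const {u : G → ℝ} {m n : WithTop ℕ∞} (hu : ContDiff ℝ n u)
    (hmn : m + 1 ≤ n) (w : G) : ContDiff ℝ m fun q => fderiv ℝ u q w :=
  (hu.fderiv_right hmn).clm_apply contDiff_const

lemma integral_mul_fderiv_apply_eq_neg_integral_fderiv_apply_mul [FiniteDimensional ℝ G]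
    [MeasurableSpace G] [BorelSpace G] {μ : Measure G} [μ.IsAddHaarMeasure] {u φ : G → ℝ}
    (hu : ContDiff ℝ 1 u) (hφ : ContDiff ℝ 1 φ) (hφc : HasCompactSupport φ) (w : G) :
    ∫ x, u x * fderiv ℝ φ x w ∂μ = -∫ x, fderiv ℝ u x w * φ x ∂μ := by
  have hu' := (contDiff_fderiv_apply_const hu (zero_add 1).le w).continuous
  have hφ' := (contDiff_fderiv_apply_const hφ (zero_add 1).le w).continuous
  apply integral_mul_fderiv_eq_neg_fderiv_mul_of_integrable
  · exact (hu'.mul hφ.continuous).integrable_of_hasCompactSupport hφc.mul_left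
  · exact (hu.continuous.mul hφ').integrable_of_hasCompactSupport (hφc.fderiv_apply ℝ w).mul_left
  · exact (hu.continuous.mul hφ.continuous).integrable_of_hasCompactSupport hφc.mul_left
  · exact fun x _ => hu.differentiable one_ne_zero x
  · exact fun x _ => hφ.differentiable one_ne_zero x

lemma fderiv_comp_const_sub_apply {g : G → ℝ} (hg : Differentiable ℝ g) (p q w : G) :
    fderiv ℝ (fun q => g (p - q)) q w = -fderiv ℝ g (p - q) w := by
  have hderiv : HasFDerivAt (fun q => g (p - q)) _ q :=
    (hg (p - q)).hasFDerivAt.comp q ((hasFDerivAt_id q).const_sub p)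
  simp [hderiv.fderiv]

lemma fderiv_comp_apply {Φ : ℝ → ℝ} (hΦ : Differentiable ℝ Φ) {u : G → ℝ}
    (hu : Differentiable ℝ u) (q w : G) :
    fderiv ℝ (fun q => Φ (u q)) q w = deriv Φ (u q) * fderiv ℝ u q w := by
  have hderiv : HasFDerivAt (fun q => Φ (u q)) _ q :=
    (hΦ (u q)).hasDerivAt.comp_hasFDerivAt q (hu q).hasFDerivAt
  simp [hderiv.fderiv]

variable [Fintype ι] (b : G) (e : ι → G)

/-- The constant-coefficient operator `∂_b + ∑ i, ∂_{e i}²`, a sum of squares of directional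
derivatives with a drift `b`. With `b = (0, -1)` and `e` the spatial basis vectors of `ℝ^N × ℝ`
it is `-∂_t + Δ`. -/
def diffusionOp (u : G → ℝ) (p : G) : ℝ :=
  fderiv ℝ u p b + ∑ i, fderiv ℝ (fun q => fderiv ℝ u q (e i)) p (e i)

lemma continuous_diffusionOp {u : G → ℝ} (hu : ContDiff ℝ 2 u) :
    Continuous (diffusionOp b e u) := by
  have hu' := fun w => contDiff_fderiv_apply_const (m := 1) hu one_add_one_eq_two.le w
  exact (hu' b).continuous.add <| continuous_finsetSum _ fun i _ =>
    (contDiff_fderiv_apply_const (hu' (e i)) (zero_add 1).le (e i)).continuous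

lemma tsupport_diffusionOp_subset (u : G → ℝ) : tsupport (diffusionOp b e u) ⊆ tsupport u := by
  refine closure_minimal (Function.support_subset_iff'.2 fun p hp => ?_) (isClosed_tsupport u)
  have hu' : ∀ w, p ∉ tsupport fun q => fderiv ℝ u q w := fun w hw =>
    hp (tsupport_fderiv_apply_subset ℝ w hw)
  simp [diffusionOp, fderiv_of_notMem_tsupport ℝ hp, fderiv_of_notMem_tsupport ℝ (hu' _)]

lemma integral_mul_diffusionOp_neg [FiniteDimensional ℝ G] [MeasurableSpace G] [BorelSpace G]
    {μ : Measure G} [μ.IsAddHaarMeasure] {u φ : G → ℝ} (hu : ContDiff ℝ 2 u)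
    (hφ : ContDiff ℝ 2 φ) (hφc : HasCompactSupport φ) :
    ∫ x, u x * diffusionOp (-b) e φ x ∂μ = ∫ x, diffusionOp b e u x * φ x ∂μ := by
  have hu₁ : ContDiff ℝ 1 u := hu.of_le one_le_two
  have hφ₁ : ContDiff ℝ 1 φ := hφ.of_le one_le_two
  have hu' := fun w => contDiff_fderiv_apply_const (m := 1) hu one_add_one_eq_two.le w
  have hφ' := fun w => contDiff_fderiv_apply_const (m := 1) hφ one_add_one_eq_two.le w
  have hu'' := fun w => (contDiff_fderiv_apply_const (hu' w) (zero_add 1).le w).continuous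
  have hφ'' := fun w => (contDiff_fderiv_apply_const (hφ' w) (zero_add 1).le w).continuous
  have hφc' := fun w => hφc.fderiv_apply ℝ w
  have hint_φ' : Integrable (fun x => u x * fderiv ℝ φ x (-b)) μ :=
    (hu.continuous.mul (hφ' _).continuous).integrable_of_hasCompactSupport (hφc' _).mul_left
  have hint_φ'' : ∀ i ∈ Finset.univ,
      Integrable (fun x => u x * fderiv ℝ (fun q => fderiv ℝ φ q (e i)) x (e i)) μ := fun i _ =>
    (hu.continuous.mul (hφ'' _)).integrable_of_hasCompactSupport
      ((hφc' _).fderiv_apply ℝ _).mul_left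
  have hint_u' : Integrable (fun x => fderiv ℝ u x b * φ x) μ :=
    ((hu' _).continuous.mul hφ.continuous).integrable_of_hasCompactSupport hφc.mul_left
  have hint_u'' : ∀ i ∈ Finset.univ,
      Integrable (fun x => fderiv ℝ (fun q => fderiv ℝ u q (e i)) x (e i) * φ x) μ := fun i _ =>
    ((hu'' _).mul hφ.continuous).integrable_of_hasCompactSupport hφc.mul_left
  simp only [diffusionOp, mul_add, add_mul, Finset.mul_sum, Finset.sum_mul]
  rw [integral_add hint_φ' (integrable_finsetSum _ hint_φ''),
    integral_add hint_u' (integrable_finsetSum _ hint_u''),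
    integral_finsetSum _ hint_φ'', integral_finsetSum _ hint_u'']
  congr 1
  · rw [integral_mul_fderiv_apply_eq_neg_integral_fderiv_apply_mul hu₁ hφ₁ hφc, ← integral_neg]
    simp
  · refine Finset.sum_congr rfl fun i _ => ?_
    rw [integral_mul_fderiv_apply_eq_neg_integral_fderiv_apply_mul hu₁ (hφ' _) (hφc' _),
      integral_mul_fderiv_apply_eq_neg_integral_fderiv_apply_mul (hu' _) hφ₁ hφc, neg_neg]

lemma diffusionOp_comp {Φ : ℝ → ℝ} (hΦ : ContDiff ℝ 2 Φ) {u : G → ℝ} (hu : ContDiff ℝ 2 u)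
    (p : G) : diffusionOp b e (fun q => Φ (u q)) p =
      deriv Φ (u p) * diffusionOp b e u p +
        deriv (deriv Φ) (u p) * ∑ i, fderiv ℝ u p (e i) ^ 2 := by
  have hu₁ : Differentiable ℝ u := hu.differentiable two_ne_zero
  have hΦ₁ : Differentiable ℝ Φ := hΦ.differentiable two_ne_zero
  have hΦ₂ : Differentiable ℝ (deriv Φ) :=
    ((contDiff_succ_iff_deriv (n := 1)).1 hΦ).2.2.differentiable one_ne_zero
  have hu' : ∀ w, Differentiable ℝ fun q => fderiv ℝ u q w := fun w =>
    (contDiff_fderiv_apply_const hu one_add_one_eq_two.le w).differentiable one_ne_zero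
  have hΦ'u : DifferentiableAt ℝ (fun q => deriv Φ (u q)) p := (hΦ₂.comp hu₁) p
  have hsecond : ∀ w, fderiv ℝ (fun q => deriv Φ (u q) * fderiv ℝ u q w) p w =
      deriv Φ (u p) * fderiv ℝ (fun q => fderiv ℝ u q w) p w +
        deriv (deriv Φ) (u p) * fderiv ℝ u p w ^ 2 := fun w => by
    rw [fderiv_fun_mul hΦ'u (hu' w p)]
    simp [fderiv_comp_apply hΦ₂ hu₁]
    ring
  simp only [diffusionOp, fderiv_comp_apply hΦ₁ hu₁, hsecond, Finset.sum_add_distrib,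
    Finset.mul_sum, mul_add]
  ring

lemma deriv_mul_diffusionOp_le_diffusionOp_comp {Φ : ℝ → ℝ} (hΦ : ContDiff ℝ 2 Φ)
    (hconv : ConvexOn ℝ univ Φ) {u : G → ℝ} (hu : ContDiff ℝ 2 u) (p : G) :
    deriv Φ (u p) * diffusionOp b e u p ≤ diffusionOp b e (fun q => Φ (u q)) p := by
  have hmono : Monotone (deriv Φ) := monotoneOn_univ.1 <|
    hconv.monotoneOn_deriv fun r _ => hΦ.differentiable two_ne_zero r
  rw [diffusionOp_comp b e hΦ hu]
  exact le_add_of_nonneg_right <|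
    mul_nonneg hmono.deriv_nonneg (Finset.sum_nonneg fun i _ => sq_nonneg _)

lemma diffusionOp_comp_const_sub {ρ : G → ℝ} (hρ : ContDiff ℝ 2 ρ) (p q : G) :
    diffusionOp b e (fun q => ρ (p - q)) q = diffusionOp (-b) e ρ (p - q) := by
  have hρ' : ∀ w, Differentiable ℝ fun q => fderiv ℝ ρ q w := fun w =>
    (contDiff_fderiv_apply_const hρ one_add_one_eq_two.le w).differentiable one_ne_zero
  simp [diffusionOp, fderiv_comp_const_sub_apply (hρ.differentiable two_ne_zero),
    fderiv_comp_const_sub_apply (hρ' _)]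

lemma diffusionOp_convolution [FiniteDimensional ℝ G] [MeasurableSpace G] [BorelSpace G]
    {μ : Measure G} [μ.IsAddHaarMeasure] {f ρ : G → ℝ} (hf : LocallyIntegrable f μ)
    (hρ : ContDiff ℝ 2 ρ) (hρc : HasCompactSupport ρ) (p : G) :
    diffusionOp b e (ρ ⋆[lsmul ℝ ℝ, μ] f) p = (diffusionOp b e ρ ⋆[lsmul ℝ ℝ, μ] f) p := by
  have hρ' := fun w => contDiff_fderiv_apply_const (m := 1) hρ one_add_one_eq_two.le w
  have hρc' := fun w => hρc.fderiv_apply ℝ w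
  have hconv : ∀ {g : G → ℝ}, Continuous g → HasCompactSupport g →
      Integrable (fun q => g q • f (p - q)) μ := fun hg hgc =>
    hgc.convolutionExists_left (lsmul ℝ ℝ) hg hf p
  have hint' : Integrable (fun q => fderiv ℝ ρ q b • f (p - q)) μ :=
    hconv (hρ' b).continuous (hρc' b)
  have hint'' : ∀ i ∈ Finset.univ, Integrable
      (fun q => fderiv ℝ (fun q => fderiv ℝ ρ q (e i)) q (e i) • f (p - q)) μ := fun i _ =>
    hconv (contDiff_fderiv_apply_const (hρ' _) (zero_add 1).le _).continuous
      ((hρc' _).fderiv_apply ℝ _)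
  calc diffusionOp b e (ρ ⋆[lsmul ℝ ℝ, μ] f) p
      = ((fun q => fderiv ℝ ρ q b) ⋆[lsmul ℝ ℝ, μ] f) p + ∑ i,
          ((fun q => fderiv ℝ (fun q => fderiv ℝ ρ q (e i)) q (e i)) ⋆[lsmul ℝ ℝ, μ] f) p := by
        simp only [diffusionOp, fderiv_convolution_lsmul_apply hf (hρ.of_le one_le_two) hρc,
          fderiv_convolution_lsmul_apply hf (hρ' _) (hρc' _)]
    _ = (diffusionOp b e ρ ⋆[lsmul ℝ ℝ, μ] f) p := by
        simp only [convolution_lsmul, diffusionOp, add_smul, Finset.sum_smul]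
        rw [integral_add hint' (integrable_finsetSum _ hint''), integral_finsetSum _ hint'']

end DiffusionOp

section TestFunctionSupport

variable {G : Type*} [TopologicalSpace G] {U : Set G}

lemma eq_zero_of_notMem_of_tsupport_subset {R : Type*} [Zero R] {φ : G → R}
    (hφU : tsupport φ ⊆ U) {p : G} (hp : p ∉ U) : φ p = 0 :=
  image_eq_zero_of_notMem_tsupport fun hpφ => hp (hφU hpφ)

lemma mul_eq_mul_of_eqOn_of_tsupport_subset {R : Type*} [MulZeroClass R] {f f' ψ : G → R}
    (hf : EqOn f f' U) (hψU : tsupport ψ ⊆ U) (p : G) : f p * ψ p = f' p * ψ p := by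
  by_cases hp : p ∈ U
  · rw [hf hp]
  · rw [eq_zero_of_notMem_of_tsupport_subset hψU hp, mul_zero, mul_zero]

variable [MeasurableSpace G] {μ : Measure G}

lemma setIntegral_mul_eq_integral_mul_of_tsupport_subset {ψ : G → ℝ}
    (hψU : tsupport ψ ⊆ U) (f : G → ℝ) : ∫ p in U, f p * ψ p ∂μ = ∫ p, f p * ψ p ∂μ :=
  setIntegral_eq_integral_of_forall_compl_eq_zero fun p hp => by
    rw [eq_zero_of_notMem_of_tsupport_subset hψU hp, mul_zero]

end TestFunctionSupport

section WeakSubsolution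

variable {G ι : Type*} [NormedAddCommGroup G] [NormedSpace ℝ G] [MeasurableSpace G] [Fintype ι]
  {μ : Measure G} {b : G} {e : ι → G}

/-- `f` satisfies `∂_b f + ∑ i, ∂_{e i}² f ≥ h` in the sense of distributions on `W`: the transposed
operator `diffusionOp (-b) e` falls on nonnegative test functions. Both integrals run over the
whole space, since the integrands vanish off `tsupport φ ⊆ W`. -/
def IsWeakSubsolution (μ : Measure G) (b : G) (e : ι → G) (W : Set G) (f h : G → ℝ) : Prop :=
  ∀ φ : G → ℝ, ContDiff ℝ (⊤ : ℕ∞) φ → HasCompactSupport φ → tsupport φ ⊆ W → (∀ p, 0 ≤ φ p) →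
    ∫ p, h p * φ p ∂μ ≤ ∫ p, f p * diffusionOp (-b) e φ p ∂μ

namespace IsWeakSubsolution

variable {W : Set G} {f h : G → ℝ}

lemma congr_of_subset (H : IsWeakSubsolution μ b e W f h) {U : Set G} (hUW : U ⊆ W)
    {f' h' : G → ℝ} (hf : EqOn f f' U) (hh : EqOn h h' U) :
    IsWeakSubsolution μ b e U f' h' := fun φ hφ hφc hφU hφ0 => by
  have hLφU := (tsupport_diffusionOp_subset (-b) e φ).trans hφU
  simpa only [mul_eq_mul_of_eqOn_of_tsupport_subset hf hLφU,
    mul_eq_mul_of_eqOn_of_tsupport_subset hh hφU] using H φ hφ hφc (hφU.trans hUW) hφ0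

lemma of_forall_isCompact
    (H : ∀ K : Set G, IsCompact K → K ⊆ W → IsWeakSubsolution μ b e K f h) :
    IsWeakSubsolution μ b e W f h := fun φ hφ hφc hφW =>
  H (tsupport φ) hφc.isCompact hφW φ hφ hφc Subset.rfl

lemma of_tendsto_L1 {K : Set G} [OpensMeasurableSpace G] {u g : ℕ → G → ℝ}
    (H : ∀ᶠ n in atTop, IsWeakSubsolution μ b e K (u n) (g n))
    (hu : ∀ᶠ n in atTop, IntegrableOn (u n) K μ) (hf : IntegrableOn f K μ)
    (hg : ∀ᶠ n in atTop, IntegrableOn (g n) K μ) (hh : IntegrableOn h K μ)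
    (hu_lim : Tendsto (fun n => ∫⁻ p in K, ‖u n p - f p‖ₑ ∂μ) atTop (𝓝 0))
    (hg_lim : Tendsto (fun n => ∫⁻ p in K, ‖g n p - h p‖ₑ ∂μ) atTop (𝓝 0)) :
    IsWeakSubsolution μ b e K f h := fun φ hφ hφc hφK hφ0 => by
  have hLφ : Continuous (diffusionOp (-b) e φ) :=
    continuous_diffusionOp _ _ (hφ.of_le (WithTop.coe_le_coe.2 le_top))
  have hLφK := (tsupport_diffusionOp_subset (-b) e φ).trans hφK
  have hLφc : HasCompactSupport (diffusionOp (-b) e φ) :=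
    hφc.mono' (subset_closure.trans (tsupport_diffusionOp_subset (-b) e φ))
  have hlim : ∀ {w : ℕ → G → ℝ} {w₀ ψ : G → ℝ}, (∀ᶠ n in atTop, IntegrableOn (w n) K μ) →
      IntegrableOn w₀ K μ → Tendsto (fun n => ∫⁻ p in K, ‖w n p - w₀ p‖ₑ ∂μ) atTop (𝓝 0) →
      Continuous ψ → HasCompactSupport ψ → tsupport ψ ⊆ K →
      Tendsto (fun n => ∫ p, w n p * ψ p ∂μ) atTop (𝓝 (∫ p, w₀ p * ψ p ∂μ)) := by
    intro w w₀ ψ hw hw₀ hw_lim hψ hψc hψK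
    obtain ⟨C, hC⟩ := hψc.exists_bound_of_continuous hψ
    rw [← setIntegral_mul_eq_integral_mul_of_tsupport_subset hψK w₀]
    exact (tendsto_integral_mul_of_tendsto_lintegral_enorm_sub hw hw₀ hw_lim
      hψ.aestronglyMeasurable fun x => NNReal.coe_le_coe.1 <|
        (hC x).trans (Real.le_coe_toNNReal C)).congr fun n =>
          setIntegral_mul_eq_integral_mul_of_tsupport_subset hψK (w n)
  exact le_of_tendsto_of_tendsto (hlim hg hh hg_lim hφ.continuous hφc hφK)
    (hlim hu hf hu_lim hLφ hLφc hLφK) (H.mono fun n hn => hn φ hφ hφc hφK hφ0)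

variable [FiniteDimensional ℝ G] [BorelSpace G] [μ.IsAddHaarMeasure]

lemma of_forall_le_diffusionOp (hf : ContDiff ℝ 2 f) (hh : LocallyIntegrable h μ)
    (hle : ∀ p ∈ W, h p ≤ diffusionOp b e f p) : IsWeakSubsolution μ b e W f h :=
    fun φ hφ hφc hφW hφ0 => by
  rw [integral_mul_diffusionOp_neg b e hf (hφ.of_le (WithTop.coe_le_coe.2 le_top)) hφc]
  refine integral_mono (hh.integrable_smul_right_of_hasCompactSupport hφ.continuous hφc)
    (((continuous_diffusionOp b e hf).mul hφ.continuous).integrable_of_hasCompactSupport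
      hφc.mul_left) fun p => ?_
  by_cases hp : p ∈ W
  · exact mul_le_mul_of_nonneg_right (hle p hp) (hφ0 p)
  · simp [eq_zero_of_notMem_of_tsupport_subset hφW hp]

/- The reflected kernel `q ↦ ρ (p - q)` is an admissible test function. -/
lemma convolution_le_diffusionOp_convolution (H : IsWeakSubsolution μ b e W f h)
    (hf : LocallyIntegrable f μ) {ρ : G → ℝ} (hρ : ContDiff ℝ (⊤ : ℕ∞) ρ)
    (hρc : HasCompactSupport ρ) (hρ0 : ∀ q, 0 ≤ ρ q) {p : G}
    (hpW : tsupport (fun q => ρ (p - q)) ⊆ W) :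
    (ρ ⋆[lsmul ℝ ℝ, μ] h) p ≤ diffusionOp b e (ρ ⋆[lsmul ℝ ℝ, μ] f) p := by
  have hρ₂ : ContDiff ℝ 2 ρ := hρ.of_le (WithTop.coe_le_coe.2 le_top)
  have htest := H (fun q => ρ (p - q)) (hρ.comp (contDiff_const.sub contDiff_id))
    (hρc.comp_homeomorph (Homeomorph.subLeft p)) hpW fun q => hρ0 _
  simp only [diffusionOp_comp_const_sub _ _ hρ₂, neg_neg] at htest
  rw [diffusionOp_convolution b e hf hρ₂ hρc, convolution_lsmul_swap, convolution_lsmul_swap]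
  simpa only [smul_eq_mul, mul_comm] using htest

lemma exists_mollification_tendsto_L1 {K : Set G} {δ : ℝ} (hδ : 0 < δ)
    (H : IsWeakSubsolution μ b e (Metric.cthickening δ K) f h) (hf : Integrable f μ)
    (hh : Integrable h μ) :
    ∃ u g : ℕ → G → ℝ, (∀ n, ContDiff ℝ 2 (u n)) ∧ (∀ n, Continuous (g n)) ∧
      (∀ᶠ n in atTop, ∀ p ∈ K, g n p ≤ diffusionOp b e (u n) p) ∧
      (∀ᵐ p ∂μ, Tendsto (fun n => u n p) atTop (𝓝 (f p))) ∧
      Tendsto (fun n => ∫⁻ p, ‖u n p - f p‖ₑ ∂μ) atTop (𝓝 0) ∧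
      Tendsto (fun n => ∫⁻ p, ‖g n p - h p‖ₑ ∂μ) atTop (𝓝 0) := by
  obtain ⟨B, hB, hB2⟩ := exists_seq_contDiffBump_rOut_tendsto_zero (0 : G)
  refine ⟨fun n => (B n).normed μ ⋆[lsmul ℝ ℝ, μ] f, fun n => (B n).normed μ ⋆[lsmul ℝ ℝ, μ] h,
    fun n => (B n).hasCompactSupport_normed.contDiff_convolution_left _ (B n).contDiff_normed
      hf.locallyIntegrable,
    fun n => (B n).hasCompactSupport_normed.continuous_convolution_left _
      (B n).continuous_normed hh.locallyIntegrable, ?_,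
    ContDiffBump.ae_convolution_tendsto_right_of_locallyIntegrable hB (.of_forall hB2)
      hf.locallyIntegrable,
    tendsto_lintegral_enorm_convolution_normed_sub hf hB hB2,
    tendsto_lintegral_enorm_convolution_normed_sub hh hB hB2⟩
  filter_upwards [hB.eventually_lt_const hδ] with n hn p hp
  refine H.convolution_le_diffusionOp_convolution hf.locallyIntegrable (B n).contDiff_normed
    (B n).hasCompactSupport_normed (B n).nonneg_normed ?_
  calc tsupport (fun q => (B n).normed μ (p - q))
      ⊆ Metric.closedBall p (B n).rOut := closure_minimal (fun q hq => by
        have hpq : p - q ∈ Function.support ((B n).normed μ) := hq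
        rw [(B n).support_normed_eq, mem_ball_zero_iff] at hpq
        exact mem_closedBall_iff_norm'.2 hpq.le) Metric.isClosed_closedBall
    _ ⊆ Metric.closedBall p δ := Metric.closedBall_subset_closedBall hn.le
    _ ⊆ Metric.cthickening δ K := Metric.closedBall_subset_cthickening hp δ

lemma comp_convex_of_integrable {K : Set G} (hK : IsCompact K) {δ : ℝ} (hδ : 0 < δ)
    (H : IsWeakSubsolution μ b e (Metric.cthickening δ K) f h) (hf : Integrable f μ)
    (hh : Integrable h μ) {Φ : ℝ → ℝ} {C : ℝ≥0} (hΦ : ContDiff ℝ 2 Φ)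
    (hconv : ConvexOn ℝ univ Φ) (hmono : Monotone Φ) (hlip : LipschitzWith C Φ) :
    IsWeakSubsolution μ b e K (fun p => Φ (f p)) (fun p => deriv Φ (f p) * h p) := by
  obtain ⟨u, g, hu, hg, hle, hu_ae, hu_lim, hg_lim⟩ := H.exists_mollification_tendsto_L1 hδ hf hh
  have hΦ' : Continuous (deriv Φ) := hΦ.continuous_deriv one_le_two
  have hΦ'C : ∀ r, ‖deriv Φ r‖₊ ≤ C := fun r => norm_deriv_le_of_lipschitz hlip
  have : IsFiniteMeasure (μ.restrict K) := isFiniteMeasure_restrict.2 hK.measure_lt_top.ne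
  have hΦu : ∀ n, ContDiff ℝ 2 fun p => Φ (u n p) := fun n => hΦ.comp (hu n)
  have hΦ'u : ∀ n, Continuous fun p => deriv Φ (u n p) := fun n => hΦ'.comp (hu n).continuous
  have hΦ'ug : ∀ n, Continuous fun p => deriv Φ (u n p) * g n p := fun n => (hΦ'u n).mul (hg n)
  have hrestrict : ∀ {w : ℕ → G → ℝ} {w₀ : G → ℝ},
      Tendsto (fun n => ∫⁻ p, ‖w n p - w₀ p‖ₑ ∂μ) atTop (𝓝 0) →
      Tendsto (fun n => ∫⁻ p in K, ‖w n p - w₀ p‖ₑ ∂μ) atTop (𝓝 0) := fun hw =>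
    tendsto_of_tendsto_of_tendsto_of_le_of_le tendsto_const_nhds hw (fun _ => zero_le)
      fun _ => setLIntegral_le_lintegral _ _
  refine of_tendsto_L1 (u := fun n p => Φ (u n p)) (g := fun n p => deriv Φ (u n p) * g n p)
    ?_ (.of_forall fun n => (hΦu n).continuous.continuousOn.integrableOn_compact hK)
    (integrable_comp_of_lipschitzWith hlip hf.integrableOn)
    (.of_forall fun n => (hΦ'ug n).continuousOn.integrableOn_compact hK)
    (hh.integrableOn.bdd_mul (hΦ'.comp_aestronglyMeasurable hf.integrableOn.aestronglyMeasurable)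
      (.of_forall fun p => hΦ'C (f p)))
    (tendsto_lintegral_enorm_sub_comp_lipschitz hlip (hrestrict hu_lim))
    (tendsto_lintegral_enorm_sub_smul (fun n => (hΦ'u n).aestronglyMeasurable)
      (fun n p => hΦ'C (u n p)) ?_ hh.integrableOn (hrestrict hg_lim))
  · filter_upwards [hle] with n hn
    refine of_forall_le_diffusionOp (hΦu n) (hΦ'ug n).locallyIntegrable fun p hp => ?_
    exact (mul_le_mul_of_nonneg_left (hn p hp) hmono.deriv_nonneg).trans
      (deriv_mul_diffusionOp_le_diffusionOp_comp b e hΦ hconv (hu n) p)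
  · exact (ae_restrict_of_ae hu_ae).mono fun p hp => (hΦ'.tendsto (f p)).comp hp

lemma comp_convex (hW : IsOpen W) (H : IsWeakSubsolution μ b e W f h)
    (hf : LocallyIntegrableOn f W μ) (hh : LocallyIntegrableOn h W μ) {Φ : ℝ → ℝ} {C : ℝ≥0}
    (hΦ : ContDiff ℝ 2 Φ) (hconv : ConvexOn ℝ univ Φ) (hmono : Monotone Φ)
    (hlip : LipschitzWith C Φ) :
    IsWeakSubsolution μ b e W (fun p => Φ (f p)) (fun p => deriv Φ (f p) * h p) := by
  refine of_forall_isCompact fun K hK hKW => ?_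
  obtain ⟨δ, hδ, hδW⟩ := hK.exists_cthickening_subset_open hW hKW
  set K' := Metric.cthickening δ K
  have hK' : IsCompact K' := hK.cthickening
  have hKK' : K ⊆ K' := Metric.self_subset_cthickening K
  have heq : ∀ w : G → ℝ, EqOn (K'.indicator w) w K' := fun w => eqOn_indicator
  have hcomp := (H.congr_of_subset hδW (heq f).symm (heq h).symm).comp_convex_of_integrable hK hδ
    ((hf.integrableOn_compact_subset hδW hK').integrable_indicator hK'.measurableSet)
    ((hh.integrableOn_compact_subset hδW hK').integrable_indicator hK'.measurableSet)
    hΦ hconv hmono hlip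
  refine hcomp.congr_of_subset Subset.rfl (fun p hp => ?_) fun p hp => ?_ <;>
    simp only [heq _ (hKK' hp)]

end IsWeakSubsolution

end WeakSubsolution

section SmoothPosPart

/-- A smooth convex approximation of `r ↦ max r 0`, which it tends to as `n → ∞`. The ramp
`s ↦ Real.smoothTransition (1 + n * s)` serving as its derivative is already `1` at `s = 0`, so that
the limit of the derivatives is the indicator of `[0, ∞)` and not of `(0, ∞)`. -/
def smoothPosPart (n : ℕ) (r : ℝ) : ℝ := ∫ s in 0..r, Real.smoothTransition (1 + n * s)

lemma continuous_smoothTransition_ramp (n : ℕ) :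
    Continuous fun s : ℝ => Real.smoothTransition (1 + n * s) :=
  Real.smoothTransition.continuous.comp (by fun_prop)

lemma tendsto_smoothTransition_ramp (s : ℝ) :
    Tendsto (fun n : ℕ => Real.smoothTransition (1 + n * s)) atTop
      (𝓝 (if 0 ≤ s then 1 else 0)) := by
  by_cases hs : 0 ≤ s
  · have hone : ∀ n : ℕ, Real.smoothTransition (1 + n * s) = 1 := fun n =>
      Real.smoothTransition.one_of_one_le (le_add_of_nonneg_right (by positivity))
    simp [hone, hs]
  · have hlim : Tendsto (fun n : ℕ => 1 + n * s) atTop atBot :=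
      tendsto_atBot_add_const_left _ _
        (tendsto_natCast_atTop_atTop.atTop_mul_const_of_neg (not_le.1 hs))
    rw [if_neg hs]
    refine tendsto_const_nhds.congr' ?_
    filter_upwards [hlim.eventually_le_atBot 0] with n hn
    exact (Real.smoothTransition.zero_of_nonpos hn).symm

lemma hasDerivAt_smoothPosPart (n : ℕ) (r : ℝ) :
    HasDerivAt (smoothPosPart n) (Real.smoothTransition (1 + n * r)) r :=
  (continuous_smoothTransition_ramp n).integral_hasStrictDerivAt 0 r |>.hasDerivAt

lemma deriv_smoothPosPart (n : ℕ) :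
    deriv (smoothPosPart n) = fun r => Real.smoothTransition (1 + n * r) :=
  deriv_eq (hasDerivAt_smoothPosPart n)

lemma contDiff_smoothPosPart (n : ℕ) : ContDiff ℝ 2 (smoothPosPart n) := by
  refine contDiff_succ_iff_deriv (n := 1).2
    ⟨fun r => (hasDerivAt_smoothPosPart n r).differentiableAt, by simp, ?_⟩
  rw [deriv_smoothPosPart]
  exact Real.smoothTransition.contDiff.comp (by fun_prop)

lemma monotone_smoothPosPart (n : ℕ) : Monotone (smoothPosPart n) :=
  monotone_of_hasDerivAt_nonneg (hasDerivAt_smoothPosPart n) fun _ =>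
    Real.smoothTransition.nonneg _

lemma convexOn_smoothPosPart (n : ℕ) : ConvexOn ℝ univ (smoothPosPart n) := by
  refine Monotone.convexOn_univ_of_deriv
    (fun r => (hasDerivAt_smoothPosPart n r).differentiableAt) ?_
  rw [deriv_smoothPosPart]
  exact fun r s hrs => Real.smoothTransition.monotone (by gcongr)

lemma lipschitzWith_smoothPosPart (n : ℕ) : LipschitzWith 1 (smoothPosPart n) := by
  refine lipschitzWith_of_nnnorm_deriv_le
    (fun r => (hasDerivAt_smoothPosPart n r).differentiableAt) fun r => ?_
  rw [deriv_smoothPosPart, ← NNReal.coe_le_coe, coe_nnnorm,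
    Real.norm_of_nonneg (Real.smoothTransition.nonneg _)]
  exact Real.smoothTransition.le_one _

lemma abs_smoothPosPart_le (n : ℕ) (r : ℝ) : |smoothPosPart n r| ≤ |r| := by
  simpa [smoothPosPart] using (lipschitzWith_smoothPosPart n).norm_sub_le r 0

lemma integral_ite_nonneg (r : ℝ) : ∫ s in 0..r, (if 0 ≤ s then (1 : ℝ) else 0) = max r 0 := by
  rcases le_total 0 r with hr | hr
  · rw [intervalIntegral.integral_congr_uIoo (g := fun _ => (1 : ℝ)) fun s hs => ?_]
    · simp [hr]
    · rw [uIoo_of_le hr] at hs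
      exact if_pos hs.1.le
  · rw [intervalIntegral.integral_congr_uIoo (g := fun _ => (0 : ℝ)) fun s hs => ?_]
    · simp [hr]
    · rw [uIoo_of_ge hr] at hs
      exact if_neg hs.2.not_ge

lemma tendsto_smoothPosPart (r : ℝ) :
    Tendsto (fun n => smoothPosPart n r) atTop (𝓝 (max r 0)) := by
  rw [← integral_ite_nonneg]
  refine intervalIntegral.tendsto_integral_filter_of_dominated_convergence (fun _ => 1)
    (.of_forall fun n => (continuous_smoothTransition_ramp n).aestronglyMeasurable)
    (.of_forall fun n => .of_forall fun s _ => ?_) intervalIntegrable_const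
    (.of_forall fun s _ => tendsto_smoothTransition_ramp s)
  rw [Real.norm_of_nonneg (Real.smoothTransition.nonneg _)]
  exact Real.smoothTransition.le_one _

lemma nnnorm_deriv_smoothPosPart_le_one (n : ℕ) (r : ℝ) : ‖deriv (smoothPosPart n) r‖₊ ≤ 1 :=
  norm_deriv_le_of_lipschitz (lipschitzWith_smoothPosPart n)

variable {α : Type*} [MeasurableSpace α] {μ : Measure α} {f h : α → ℝ}

lemma tendsto_lintegral_enorm_smoothPosPart_comp_sub (hf : Integrable f μ) :
    Tendsto (fun n => ∫⁻ x, ‖smoothPosPart n (f x) - max (f x) 0‖ₑ ∂μ) atTop (𝓝 0) := by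
  simp_rw [← ofReal_norm]
  exact tendsto_lintegral_norm_of_dominated_convergence
    (fun n => (lipschitzWith_smoothPosPart n).continuous.comp_aestronglyMeasurable
      hf.aestronglyMeasurable)
    hf.norm.hasFiniteIntegral (fun n => .of_forall fun x => abs_smoothPosPart_le n (f x))
    (.of_forall fun x => tendsto_smoothPosPart (f x))

lemma aestronglyMeasurable_deriv_smoothPosPart_comp (hf : AEStronglyMeasurable f μ) (n : ℕ) :
    AEStronglyMeasurable (fun x => deriv (smoothPosPart n) (f x)) μ :=
  ((contDiff_smoothPosPart n).continuous_deriv one_le_two).comp_aestronglyMeasurable hf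

lemma tendsto_lintegral_enorm_deriv_smoothPosPart_comp_mul_sub (hf : AEStronglyMeasurable f μ)
    (hh : Integrable h μ) :
    Tendsto (fun n => ∫⁻ x, ‖deriv (smoothPosPart n) (f x) * h x -
      {y | 0 ≤ f y}.indicator h x‖ₑ ∂μ) atTop (𝓝 0) := by
  have hlim : ∀ x, Tendsto (fun n => deriv (smoothPosPart n) (f x)) atTop
      (𝓝 (if 0 ≤ f x then 1 else 0)) := fun x => by
    simpa only [deriv_smoothPosPart] using tendsto_smoothTransition_ramp (f x)
  have hind : {y | 0 ≤ f y}.indicator h = fun x => (if 0 ≤ f x then (1 : ℝ) else 0) • h x := by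
    ext x
    simp [indicator_apply]
  rw [hind]
  exact tendsto_lintegral_enorm_sub_smul (aestronglyMeasurable_deriv_smoothPosPart_comp hf)
    (fun n x => nnnorm_deriv_smoothPosPart_le_one n (f x)) (.of_forall hlim) hh (u := fun _ => h)
    (by simp)

end SmoothPosPart

theorem stmt_0_general {G ι : Type*} [NormedAddCommGroup G] [NormedSpace ℝ G]
    [FiniteDimensional ℝ G] [MeasurableSpace G] [BorelSpace G] [Fintype ι] {μ : Measure G}
    [μ.IsAddHaarMeasure] {b : G} {e : ι → G} {W : Set G} (hW : IsOpen W)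
    {f h : G → ℝ} (hf : LocallyIntegrableOn f W μ) (hh : LocallyIntegrableOn h W μ)
    (H : IsWeakSubsolution μ b e W f h) :
    IsWeakSubsolution μ b e W (fun p => max (f p) 0) ({p | 0 ≤ f p}.indicator h) := by
  refine .of_forall_isCompact fun K hK hKW => ?_
  have hfK : IntegrableOn f K μ := hf.integrableOn_compact_subset hKW hK
  have hhK : IntegrableOn h K μ := hh.integrableOn_compact_subset hKW hK
  have : IsFiniteMeasure (μ.restrict K) := isFiniteMeasure_restrict.2 hK.measure_lt_top.ne
  have hderiv_int : ∀ n, IntegrableOn (fun p => deriv (smoothPosPart n) (f p) * h p) K μ := fun n =>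
    hhK.bdd_mul (aestronglyMeasurable_deriv_smoothPosPart_comp hfK.aestronglyMeasurable n)
      (.of_forall fun p => nnnorm_deriv_smoothPosPart_le_one n (f p))
  have happrox : ∀ n, IsWeakSubsolution μ b e K (fun p => smoothPosPart n (f p))
      (fun p => deriv (smoothPosPart n) (f p) * h p) := fun n =>
    (H.comp_convex hW hf hh (contDiff_smoothPosPart n) (convexOn_smoothPosPart n)
      (monotone_smoothPosPart n) (lipschitzWith_smoothPosPart n)).congr_of_subset hKW
        (eqOn_refl _ _) (eqOn_refl _ _)
  exact .of_tendsto_L1 (.of_forall happrox)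
    (.of_forall fun n => integrable_comp_of_lipschitzWith (lipschitzWith_smoothPosPart n) hfK)
    hfK.pos_part (.of_forall hderiv_int)
    (hhK.indicator₀ (nullMeasurableSet_le aemeasurable_const hfK.aemeasurable))
    (tendsto_lintegral_enorm_smoothPosPart_comp_sub hfK)
    (tendsto_lintegral_enorm_deriv_smoothPosPart_comp_mul_sub hfK.aestronglyMeasurable hhK)

section HeatOperator

instance isAddHaarMeasure_volume_prod {E F : Type*} [AddGroup E] [TopologicalSpace E]
    [IsTopologicalAddGroup E] [SecondCountableTopology E] [MeasureSpace E] [BorelSpace E]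
    [(volume : Measure E).IsAddHaarMeasure] [SFinite (volume : Measure E)] [AddGroup F]
    [TopologicalSpace F] [IsTopologicalAddGroup F] [SecondCountableTopology F] [MeasureSpace F]
    [BorelSpace F] [(volume : Measure F).IsAddHaarMeasure] [SFinite (volume : Measure F)] :
    (volume : Measure (E × F)).IsAddHaarMeasure :=
  Measure.prod.instIsAddHaarMeasure volume volume

lemma fderiv_comp_prodMk_right_apply {E F : Type*} [NormedAddCommGroup E] [NormedSpace ℝ E]
    [NormedAddCommGroup F] [NormedSpace ℝ F] {g : E × F → ℝ} (hg : Differentiable ℝ g) (t : F)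
    (x w : E) : fderiv ℝ (fun y => g (y, t)) x w = fderiv ℝ g (x, t) (w, 0) := by
  have hderiv : HasFDerivAt (fun y => g (y, t)) _ x :=
    (hg (x, t)).hasFDerivAt.comp x (hasFDerivAt_prodMk_left (𝕜 := ℝ) x t)
  simp [hderiv.fderiv]

variable {N : ℕ}

lemma deriv_add_lap_eq_diffusionOp {φ : Euc N × ℝ → ℝ} (hφ : ContDiff ℝ 2 φ) (p : Euc N × ℝ) :
    deriv (fun s => φ (p.1, s)) p.2 + lap (fun y => φ (y, p.2)) p.1 =
      diffusionOp (0, 1) (fun i : Fin N => (EuclideanSpace.single i (1 : ℝ), (0 : ℝ))) φ p := by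
  have hφ₁ : Differentiable ℝ φ := hφ.differentiable two_ne_zero
  have hφ' : ∀ w, Differentiable ℝ fun q => fderiv ℝ φ q w := fun w =>
    (contDiff_fderiv_apply_const hφ one_add_one_eq_two.le w).differentiable one_ne_zero
  have htime : HasDerivAt (fun s => φ (p.1, s)) (fderiv ℝ φ p (0, 1)) p.2 :=
    (hφ₁ p).hasFDerivAt.comp_hasDerivAt p.2
      ((hasDerivAt_const p.2 p.1).prodMk (hasDerivAt_id p.2))
  simp only [diffusionOp, lap, htime.deriv, fderiv_comp_prodMk_right_apply hφ₁,
    fderiv_comp_prodMk_right_apply (hφ' _)]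

lemma isWeakSubsolution_heat_iff {W : Set (Euc N × ℝ)} {f h : Euc N × ℝ → ℝ} :
    IsWeakSubsolution volume (0, -1)
        (fun i : Fin N => (EuclideanSpace.single i (1 : ℝ), (0 : ℝ))) W f h ↔
      ∀ φ : Euc N × ℝ → ℝ, ContDiff ℝ (⊤ : ℕ∞) φ → HasCompactSupport φ → tsupport φ ⊆ W →
        (∀ p, 0 ≤ φ p) → (∫ p in W, h p * φ p) ≤
          ∫ p in W, f p * (deriv (fun s => φ (p.1, s)) p.2 + lap (fun y => φ (y, p.2)) p.1) := by
  refine forall₅_congr fun φ hφ _ hφW _ => ?_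
  simp only [deriv_add_lap_eq_diffusionOp (hφ.of_le (WithTop.coe_le_coe.2 le_top))]
  rw [setIntegral_mul_eq_integral_mul_of_tsupport_subset hφW,
    setIntegral_mul_eq_integral_mul_of_tsupport_subset
      ((tsupport_diffusionOp_subset _ _ φ).trans hφW), Prod.neg_mk, neg_zero, neg_neg]

end HeatOperator

/-- **Parabolic Kato inequality.** If `−∂_t v + Δv ≥ h` in `D'(W)` then
`−∂_t v⁺ + Δ v⁺ ≥ χ_{[v ≥ 0]} h` in `D'(W)`. -/
theorem stmt_0 {N : ℕ} (hN : 1 ≤ N) (W : Set (Euc N × ℝ)) (hW : IsOpen W)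
    (v h : Euc N × ℝ → ℝ) (hv_meas : Measurable v)
    (hv : LocallyIntegrableOn v W) (hh : LocallyIntegrableOn h W)
    (H : ∀ φ : Euc N × ℝ → ℝ, ContDiff ℝ (⊤ : ℕ∞) φ → HasCompactSupport φ →
      tsupport φ ⊆ W → (∀ p, 0 ≤ φ p) →
      (∫ p in W, h p * φ p) ≤
        ∫ p in W, v p * (deriv (fun s => φ (p.1, s)) p.2 + lap (fun y => φ (y, p.2)) p.1)) :
    ∀ φ : Euc N × ℝ → ℝ, ContDiff ℝ (⊤ : ℕ∞) φ → HasCompactSupport φ →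
      tsupport φ ⊆ W → (∀ p, 0 ≤ φ p) →
      (∫ p in W, ({q : Euc N × ℝ | 0 ≤ v q}.indicator h) p * φ p) ≤
        ∫ p in W, max (v p) 0 * (deriv (fun s => φ (p.1, s)) p.2 + lap (fun y => φ (y, p.2)) p.1) := by
  exact isWeakSubsolution_heat_iff.1 (stmt_0_general hW hv hh (isWeakSubsolution_heat_iff.2 H))
end
end

section
/- Let u ∈ L¹(Q_T) be a nonnegative supersolution of the equation ∂_t u − Δu + g(u) = 0 in Q_T such that g∘u ∈ L¹(Q_T). Then there exists a positive Radon measure ν on Ω such that ν is the initial trace of u, i.e., for every φ ∈ C_c(Ω), ess lim_{t→0} ∫_Ω u(·,t) φ dx = ∫_Ω φ dν. -/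
open MeasureTheory Set Filter Topology
open scoped ENNReal NNReal

noncomputable section

/-! Testing the inequality with `φ(x) η(t)`, where `φ, η ≥ 0`, shows that `t ↦ ∫_Ω u(·, t) φ dx` has
weak derivative bounded below by `∫_Ω (u Δφ − g(u) φ) dx`, a function in `L¹(0, T)`. After
subtracting its primitive, which vanishes at `0`, the function agrees almost everywhere with a
nondecreasing one; since `u ≥ 0` it is also bounded below, so it has an essential limit at `0⁺`. The
limits along cutoff functions control the mass of `u(·, t) dx` on compact sets, so uniform
approximation extends convergence from smooth `φ ≥ 0` to all of `C_c(Ω)`. The limit is a positive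
functional, which the Riesz theorem represents by a measure. -/

section EssentialLimit

/-- The filter of essential right neighbourhoods of `a`: convergence along it is the essential limit
`ess lim_{t → a⁺}`, and `EssLimInit` is the case `a = 0`. -/
def essNhdsGT (a : ℝ) : Filter ℝ := 𝓝[>] a ⊓ ae volume

instance essNhdsGT_neBot (a : ℝ) : (essNhdsGT a).NeBot := by
  refine inf_neBot_iff.2 fun {A} hA {B} hB ↦ ?_
  obtain ⟨e, hae, heA⟩ := mem_nhdsGT_iff_exists_Ioo_subset.1 hA
  have hpos : volume (Ioo a e ∩ B) ≠ 0 := by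
    rw [measure_inter_conull hB, Real.volume_Ioo]
    simpa using hae
  exact (nonempty_of_measure_ne_zero hpos).mono (inter_subset_inter_left B heA)

theorem essNhdsGT_le_nhdsGT (a : ℝ) : essNhdsGT a ≤ 𝓝[>] a := inf_le_left

theorem essNhdsGT_le_ae_restrict_Ioo {a b : ℝ} (hab : a < b) :
    essNhdsGT a ≤ ae (volume.restrict (Ioo a b)) := by
  rw [ae_restrict_eq measurableSet_Ioo, inf_comm]
  exact inf_le_inf_right _ (le_principal_iff.2 (Ioo_mem_nhdsGT hab))

theorem tendsto_csInf_image_of_monotoneOn {m : ℝ → ℝ} {S : Set ℝ} {a : ℝ}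
    (hS : S ∈ essNhdsGT a) (hSa : S ⊆ Ioi a) (hm : MonotoneOn m S) (hbdd : BddBelow (m '' S)) :
    Tendsto m (essNhdsGT a) (𝓝 (sInf (m '' S))) := by
  refine tendsto_order.2 ⟨fun y hy ↦ ?_, fun y hy ↦ ?_⟩
  · filter_upwards [hS] with x hx using hy.trans_le (csInf_le hbdd (mem_image_of_mem m hx))
  · obtain ⟨_, ⟨t, ht, rfl⟩, hty⟩ :=
      exists_lt_of_csInf_lt ((Filter.nonempty_of_mem hS).image m) hy
    have hlt : ∀ᶠ x in essNhdsGT a, x < t :=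
      mem_of_superset (essNhdsGT_le_nhdsGT a (Ioo_mem_nhdsGT (hSa ht))) fun x hx ↦ hx.2
    filter_upwards [hS, hlt] with x hx hxt using (hm hx ht hxt.le).trans_lt hty

end EssentialLimit

section WeakDerivative

/-- `f' ≥ h` on `(a, b)` in the sense of distributions, tested against nonnegative `C¹` functions
with compact support. -/
def WeakDerivGE (f h : ℝ → ℝ) (a b : ℝ) : Prop :=
  ∀ η : ℝ → ℝ, ContDiff ℝ 1 η → HasCompactSupport η → tsupport η ⊆ Ioo a b → (∀ t, 0 ≤ η t) →
    ∫ t in Ioo a b, f t * deriv η t ≤ -∫ t in Ioo a b, h t * η t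

/-- The indicator function of `[s, t]` mollified by the normalized bump function `φ`, written as an
integral of `φ` so that its derivative is visible. -/
def mollifiedIndicator (φ : ContDiffBump (0 : ℝ)) (s t τ : ℝ) : ℝ :=
  ∫ r in (s - τ)..(t - τ), φ.normed volume r

variable {φ : ContDiffBump (0 : ℝ)} {s t τ : ℝ}

theorem normed_eq_zero_of_rOut_le_abs {x : ℝ} (hx : φ.rOut ≤ |x|) : φ.normed volume x = 0 := by
  rw [← Function.notMem_support, φ.support_normed_eq]
  simpa using hx

theorem hasDerivAt_mollifiedIndicator (φ : ContDiffBump (0 : ℝ)) (s t τ : ℝ) :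
    HasDerivAt (mollifiedIndicator φ s t)
      (φ.normed volume (s - τ) - φ.normed volume (t - τ)) τ := by
  have hcont : Continuous (φ.normed volume) := φ.continuous_normed
  have hprimitive (c : ℝ) :
      HasDerivAt (fun τ ↦ ∫ r in (0 : ℝ)..(c - τ), φ.normed volume r)
        (-φ.normed volume (c - τ)) τ := by
    rw [← mul_neg_one]
    exact (hcont.integral_hasStrictDerivAt 0 (c - τ)).hasDerivAt.comp τ
      ((hasDerivAt_id τ).const_sub c)
  have hsplit : mollifiedIndicator φ s t = fun τ ↦
      (∫ r in (0 : ℝ)..(t - τ), φ.normed volume r) - ∫ r in (0 : ℝ)..(s - τ), φ.normed volume r :=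
    funext fun τ ↦ (intervalIntegral.integral_interval_sub_left
      (hcont.intervalIntegrable _ _) (hcont.intervalIntegrable _ _)).symm
  rw [hsplit, ← neg_sub_neg]
  exact (hprimitive t).sub (hprimitive s)

theorem deriv_mollifiedIndicator (φ : ContDiffBump (0 : ℝ)) (s t : ℝ) :
    deriv (mollifiedIndicator φ s t) =
      fun τ ↦ φ.normed volume (s - τ) - φ.normed volume (t - τ) :=
  funext fun τ ↦ (hasDerivAt_mollifiedIndicator φ s t τ).deriv

theorem contDiff_mollifiedIndicator (φ : ContDiffBump (0 : ℝ)) (s t : ℝ) :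
    ContDiff ℝ 1 (mollifiedIndicator φ s t) := by
  have hcont : Continuous (φ.normed volume) := φ.continuous_normed
  refine contDiff_one_iff_deriv.2
    ⟨fun τ ↦ (hasDerivAt_mollifiedIndicator φ s t τ).differentiableAt, ?_⟩
  rw [deriv_mollifiedIndicator]
  fun_prop

theorem mollifiedIndicator_nonneg (φ : ContDiffBump (0 : ℝ)) (hst : s ≤ t) (τ : ℝ) :
    0 ≤ mollifiedIndicator φ s t τ :=
  intervalIntegral.integral_nonneg (by linarith) fun r _ ↦ φ.nonneg_normed r

theorem mollifiedIndicator_le_one (φ : ContDiffBump (0 : ℝ)) (hst : s ≤ t) (τ : ℝ) :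
    mollifiedIndicator φ s t τ ≤ 1 := by
  rw [mollifiedIndicator, intervalIntegral.integral_of_le (by linarith),
    ← φ.integral_normed (μ := volume)]
  exact setIntegral_le_integral φ.integrable_normed (Eventually.of_forall φ.nonneg_normed)

theorem mollifiedIndicator_eq_zero (hst : s ≤ t) (hτ : τ ∉ Icc (s - φ.rOut) (t + φ.rOut)) :
    mollifiedIndicator φ s t τ = 0 := by
  refine intervalIntegral.integral_zero_ae (Eventually.of_forall fun r hr ↦ ?_)
  rw [uIoc_of_le (by linarith)] at hr
  refine normed_eq_zero_of_rOut_le_abs (le_abs.2 ?_)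
  by_contra! hlt
  exact hτ ⟨by linarith [hr.1], by linarith [hr.2]⟩

theorem mollifiedIndicator_eq_one (hs : s + φ.rOut < τ) (ht : τ < t - φ.rOut) :
    mollifiedIndicator φ s t τ = 1 := by
  have hpos := φ.rOut_pos
  rw [mollifiedIndicator, intervalIntegral.integral_of_le (by linarith),
    ← φ.integral_normed (μ := volume)]
  refine setIntegral_eq_integral_of_forall_compl_eq_zero fun r hr ↦ ?_
  refine normed_eq_zero_of_rOut_le_abs (le_abs.2 ?_)
  by_contra! hlt
  exact hr ⟨by linarith, by linarith⟩

theorem tsupport_mollifiedIndicator_subset (φ : ContDiffBump (0 : ℝ)) (hst : s ≤ t) :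
    tsupport (mollifiedIndicator φ s t) ⊆ Icc (s - φ.rOut) (t + φ.rOut) :=
  closure_minimal (fun _ hτ ↦ by_contra fun h ↦ hτ (mollifiedIndicator_eq_zero hst h)) isClosed_Icc

variable {φ : ℕ → ContDiffBump (0 : ℝ)}

theorem tendsto_mollifiedIndicator (hφ : Tendsto (fun n ↦ (φ n).rOut) atTop (𝓝 0)) (hst : s ≤ t)
    (hτs : τ ≠ s) (hτt : τ ≠ t) :
    Tendsto (fun n ↦ mollifiedIndicator (φ n) s t τ) atTop (𝓝 ((Ioc s t).indicator 1 τ)) := by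
  have hsmall {δ : ℝ} (hδ : 0 < δ) : ∀ᶠ n in atTop, (φ n).rOut < δ :=
    hφ.eventually (gt_mem_nhds hδ)
  refine tendsto_nhds_of_eventually_eq ?_
  by_cases hτ : τ ∈ Ioc s t
  · filter_upwards [hsmall (sub_pos.2 hτ.1), hsmall (sub_pos.2 (hτ.2.lt_of_ne hτt))] with n hs ht
    rw [mollifiedIndicator_eq_one (by linarith) (by linarith), indicator_of_mem hτ, Pi.one_apply]
  · filter_upwards [hsmall (abs_pos.2 (sub_ne_zero.2 hτs)),
      hsmall (abs_pos.2 (sub_ne_zero.2 hτt))] with n hs ht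
    rw [indicator_of_notMem hτ]
    refine mollifiedIndicator_eq_zero hst fun hmem ↦ hτ ⟨?_, ?_⟩
    · by_contra! h
      rw [abs_of_neg (sub_neg.2 (h.lt_of_ne hτs))] at hs
      linarith [hmem.1]
    · by_contra! h
      rw [abs_of_pos (by linarith)] at ht
      linarith [hmem.2]

variable {a b : ℝ} {f h : ℝ → ℝ}

theorem tendsto_setIntegral_mul_mollifiedIndicator
    (hφ : Tendsto (fun n ↦ (φ n).rOut) atTop (𝓝 0)) (hh : IntegrableOn h (Ioo a b))
    (hs : s ∈ Ioo a b) (ht : t ∈ Ioo a b) (hst : s ≤ t) :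
    Tendsto (fun n ↦ ∫ r in Ioo a b, h r * mollifiedIndicator (φ n) s t r) atTop
      (𝓝 (∫ r in s..t, h r)) := by
  have hlimit : ∫ r in s..t, h r = ∫ r in Ioo a b, h r * (Ioc s t).indicator 1 r := by
    have hsub : Ioc s t ⊆ Ioo a b := fun r hr ↦ ⟨hs.1.trans hr.1, hr.2.trans_lt ht.2⟩
    simp only [← indicator_mul_right, Pi.one_apply, mul_one]
    rw [setIntegral_indicator measurableSet_Ioc, inter_eq_right.2 hsub,
      intervalIntegral.integral_of_le hst]
  rw [hlimit]
  refine tendsto_integral_of_dominated_convergence (fun r ↦ ‖h r‖) (fun n ↦ ?_) hh.norm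
    (fun n ↦ ?_) ?_
  · exact hh.1.mul (contDiff_mollifiedIndicator (φ n) s t).continuous.aestronglyMeasurable
  · refine Eventually.of_forall fun r ↦ ?_
    rw [norm_mul, Real.norm_of_nonneg (mollifiedIndicator_nonneg (φ n) hst r)]
    exact mul_le_of_le_one_right (norm_nonneg _) (mollifiedIndicator_le_one (φ n) hst r)
  · refine ae_restrict_of_ae ?_
    filter_upwards [Measure.ae_ne volume s, Measure.ae_ne volume t] with r hrs hrt
    exact (tendsto_mollifiedIndicator hφ hst hrs hrt).const_mul (h r)

open scoped Convolution in
theorem convolution_normed_indicator {f : ℝ → ℝ} {S : Set ℝ} (hS : MeasurableSet S)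
    (φ : ContDiffBump (0 : ℝ)) (x : ℝ) :
    (φ.normed volume ⋆[ContinuousLinearMap.lsmul ℝ ℝ, volume] S.indicator f) x =
      ∫ r in S, f r * φ.normed volume (x - r) := by
  rw [convolution_eq_swap, ← integral_indicator hS]
  refine integral_congr_ae (Eventually.of_forall fun r ↦ ?_)
  by_cases hr : r ∈ S <;> simp [hr, mul_comm]

theorem ae_restrict_tendsto_setIntegral_mul_normed {S : Set ℝ} (hS : MeasurableSet S)
    (hf : IntegrableOn f S) {K : ℝ} (hφ : Tendsto (fun n ↦ (φ n).rOut) atTop (𝓝 0))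
    (hφK : ∀ᶠ n in atTop, (φ n).rOut ≤ K * (φ n).rIn) :
    ∀ᵐ x ∂volume.restrict S,
      Tendsto (fun n ↦ ∫ r in S, f r * (φ n).normed volume (x - r)) atTop (𝓝 (f x)) := by
  have hconv := ContDiffBump.ae_convolution_tendsto_right_of_locallyIntegrable hφ hφK
    (hf.integrable_indicator hS).locallyIntegrable
  refine (ae_restrict_iff' hS).2 (hconv.mono fun x hx hxS ↦ ?_)
  simpa only [convolution_normed_indicator hS, indicator_of_mem hxS] using hx

theorem integrable_mul_normed {μ : Measure ℝ} (hf : Integrable f μ) (φ : ContDiffBump (0 : ℝ))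
    (x : ℝ) : Integrable (fun r ↦ f r * φ.normed volume (x - r)) μ := by
  have hcont : Continuous (φ.normed volume) := φ.continuous_normed
  obtain ⟨C, hC⟩ := φ.hasCompactSupport_normed.exists_bound_of_continuous hcont
  exact hf.mul_bdd (by fun_prop : Continuous fun r ↦ φ.normed volume (x - r)).aestronglyMeasurable
    (Eventually.of_forall fun r ↦ hC (x - r))

theorem intervalIntegrable_of_integrableOn_Ioo (hh : IntegrableOn h (Ioo a b)) (hs : s ∈ Icc a b)
    (ht : t ∈ Icc a b) : IntervalIntegrable h volume s t := by
  have hab : a ≤ b := hs.1.trans hs.2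
  refine ((intervalIntegrable_iff_integrableOn_Ioo_of_le hab).2 hh).mono_set ?_
  rw [uIcc_of_le hab]
  exact ordConnected_Icc.uIcc_subset hs ht

theorem continuousOn_primitive_Icc (hab : a ≤ b) (hh : IntegrableOn h (Ioo a b)) :
    ContinuousOn (fun t ↦ ∫ r in a..t, h r) (Icc a b) := by
  rw [← uIcc_of_le hab]
  exact intervalIntegral.continuousOn_primitive_interval'
    ((intervalIntegrable_iff_integrableOn_Ioo_of_le hab).2 hh) left_mem_uIcc

theorem tendsto_primitive_essNhdsGT (hab : a < b) (hh : IntegrableOn h (Ioo a b)) :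
    Tendsto (fun t ↦ ∫ r in a..t, h r) (essNhdsGT a) (𝓝 0) := by
  have hwithin := continuousOn_primitive_Icc hab.le hh a (left_mem_Icc.2 hab.le)
  rw [ContinuousWithinAt, intervalIntegral.integral_same] at hwithin
  exact hwithin.mono_left
    ((essNhdsGT_le_nhdsGT a).trans (nhdsWithin_le_of_mem (Icc_mem_nhdsGT hab)))

namespace WeakDerivGE

theorem setIntegral_mul_normed_sub_le (H : WeakDerivGE f h a b) (hf : IntegrableOn f (Ioo a b))
    {φ : ContDiffBump (0 : ℝ)} (hst : s ≤ t) (hs : a < s - φ.rOut) (ht : t + φ.rOut < b) :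
    (∫ r in Ioo a b, f r * φ.normed volume (s - r)) -
        ∫ r in Ioo a b, f r * φ.normed volume (t - r) ≤
      -∫ r in Ioo a b, h r * mollifiedIndicator φ s t r := by
  have hsupp := tsupport_mollifiedIndicator_subset φ hst
  have htest := H _ (contDiff_mollifiedIndicator φ s t)
    (isCompact_Icc.of_isClosed_subset (isClosed_tsupport _) hsupp)
    (hsupp.trans (Icc_subset_Ioo hs ht)) (mollifiedIndicator_nonneg φ hst)
  rw [← integral_sub (integrable_mul_normed hf φ s) (integrable_mul_normed hf φ t)]
  simpa only [deriv_mollifiedIndicator, mul_sub] using htest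

theorem add_integral_le (H : WeakDerivGE f h a b) (hf : IntegrableOn f (Ioo a b))
    (hh : IntegrableOn h (Ioo a b)) (hφ : Tendsto (fun n ↦ (φ n).rOut) atTop (𝓝 0))
    (hs : s ∈ Ioo a b) (ht : t ∈ Ioo a b) (hst : s ≤ t)
    (hfs : Tendsto (fun n ↦ ∫ r in Ioo a b, f r * (φ n).normed volume (s - r)) atTop (𝓝 (f s)))
    (hft : Tendsto (fun n ↦ ∫ r in Ioo a b, f r * (φ n).normed volume (t - r)) atTop (𝓝 (f t))) :
    f s + ∫ r in s..t, h r ≤ f t := by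
  have hle : f s - f t ≤ -∫ r in s..t, h r := by
    refine le_of_tendsto_of_tendsto (hfs.sub hft)
      (tendsto_setIntegral_mul_mollifiedIndicator hφ hh hs ht hst).neg ?_
    filter_upwards [hφ.eventually (gt_mem_nhds (sub_pos.2 hs.1)),
      hφ.eventually (gt_mem_nhds (sub_pos.2 ht.2))] with n hsn htn
    exact H.setIntegral_mul_normed_sub_le hf hst (by linarith) (by linarith)
  linarith

theorem exists_ae_add_integral_le (H : WeakDerivGE f h a b) (hf : IntegrableOn f (Ioo a b))
    (hh : IntegrableOn h (Ioo a b)) :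
    ∃ S ∈ ae (volume.restrict (Ioo a b)), S ⊆ Ioo a b ∧
      ∀ s ∈ S, ∀ t ∈ S, s ≤ t → f s + ∫ r in s..t, h r ≤ f t := by
  let φ : ℕ → ContDiffBump (0 : ℝ) := fun n ↦
    ⟨1 / (n + 1) / 2, 1 / (n + 1), by positivity, half_lt_self (by positivity)⟩
  have hφ : Tendsto (fun n ↦ (φ n).rOut) atTop (𝓝 0) := tendsto_one_div_add_atTop_nhds_zero_nat
  have hratio : ∀ᶠ n in atTop, (φ n).rOut ≤ 2 * (φ n).rIn :=
    Eventually.of_forall fun n ↦ (mul_div_cancel₀ _ two_ne_zero).ge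
  refine ⟨_, (ae_restrict_mem measurableSet_Ioo).and
    (ae_restrict_tendsto_setIntegral_mul_normed measurableSet_Ioo hf hφ hratio),
    fun x hx ↦ hx.1, fun s hs t ht hst ↦ H.add_integral_le hf hh hφ hs.1 ht.1 hst hs.2 ht.2⟩

theorem exists_tendsto_essNhdsGT (H : WeakDerivGE f h a b) (hab : a < b)
    (hf : IntegrableOn f (Ioo a b)) (hh : IntegrableOn h (Ioo a b))
    (hf_nonneg : ∀ t ∈ Ioo a b, 0 ≤ f t) :
    ∃ L, Tendsto f (essNhdsGT a) (𝓝 L) := by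
  obtain ⟨S, hS, hSab, hle⟩ := H.exists_ae_add_integral_le hf hh
  let P : ℝ → ℝ := fun t ↦ ∫ r in a..t, h r
  have hmono : MonotoneOn (f - P) S := by
    intro s hs t ht hst
    have hadd : P s + ∫ r in s..t, h r = P t := intervalIntegral.integral_add_adjacent_intervals
      (intervalIntegrable_of_integrableOn_Ioo hh (left_mem_Icc.2 hab.le)
        (Ioo_subset_Icc_self (hSab hs)))
      (intervalIntegrable_of_integrableOn_Ioo hh (Ioo_subset_Icc_self (hSab hs))
        (Ioo_subset_Icc_self (hSab ht)))
    simp only [Pi.sub_apply]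
    linarith [hle s hs t ht hst]
  have hbdd : BddBelow ((f - P) '' S) := by
    obtain ⟨C, hC⟩ := isCompact_Icc.exists_bound_of_continuousOn
      (continuousOn_primitive_Icc hab.le hh)
    refine ⟨-C, forall_mem_image.2 fun t ht ↦ ?_⟩
    have hPC : P t ≤ C := le_of_abs_le (hC t (Ioo_subset_Icc_self (hSab ht)))
    simp only [Pi.sub_apply]
    linarith [hf_nonneg t (hSab ht)]
  have hlim := tendsto_csInf_image_of_monotoneOn (essNhdsGT_le_ae_restrict_Ioo hab hS)
    (fun t ht ↦ (hSab ht).1) hmono hbdd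
  exact ⟨_, by simpa [P] using hlim.add (tendsto_primitive_essNhdsGT hab hh)⟩

end WeakDerivGE

end WeakDerivative

section VagueLimit

open scoped CompactlySupported

theorem integrable_of_measure_tsupport_lt_top {X : Type*} [TopologicalSpace X] [MeasurableSpace X]
    [OpensMeasurableSpace X] {μ : Measure X} {f : X → ℝ} (hf : Continuous f)
    (hf_supp : HasCompactSupport f) (hμ : μ (tsupport f) < ⊤) : Integrable f μ := by
  obtain ⟨C, hC⟩ := hf_supp.exists_bound_of_continuous hf
  rw [← integrableOn_iff_integrable_of_support_subset (subset_tsupport f)]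
  exact Measure.integrableOn_of_bounded hμ.ne hf.aestronglyMeasurable (Eventually.of_forall hC)

theorem dist_integral_le_mul_integral {X : Type*} [MeasurableSpace X] {μ : Measure X}
    {φ ψ χ : X → ℝ} {δ : ℝ} (hφ : Integrable φ μ) (hψ : Integrable ψ μ) (hχ : Integrable χ μ)
    (hle : ∀ x, |φ x - ψ x| ≤ δ * χ x) :
    dist (∫ x, φ x ∂μ) (∫ x, ψ x ∂μ) ≤ δ * ∫ x, χ x ∂μ := by
  rw [dist_eq_norm, ← integral_sub hφ hψ, ← integral_const_mul]
  exact norm_integral_le_of_norm_le (hχ.const_mul δ) (Eventually.of_forall hle)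

theorem exists_tendsto_of_eventually_dist_lt {ι Y : Type*} [PseudoMetricSpace Y] [CompleteSpace Y]
    {l : Filter ι} [l.NeBot] {F : ι → Y} (hF : ∀ ε > 0, ∃ y, ∀ᶠ i in l, dist (F i) y < ε) :
    ∃ y, Tendsto F l (𝓝 y) := by
  refine CompleteSpace.complete (Metric.cauchy_iff.2 ⟨inferInstance, fun ε hε ↦ ?_⟩)
  obtain ⟨y, hy⟩ := hF (ε / 2) (half_pos hε)
  refine ⟨Metric.ball y (ε / 2), hy, fun z hz w hw ↦ ?_⟩
  calc dist z w ≤ dist z y + dist w y := dist_triangle_right z w y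
    _ < ε / 2 + ε / 2 := add_lt_add hz hw
    _ = ε := add_halves ε

section SmoothTestFunctions

variable {E : Type*} [NormedAddCommGroup E] [NormedSpace ℝ E] [FiniteDimensional ℝ E]
  {n : ℕ∞} {U : Set E}

theorem exists_contDiff_cutoff (n : ℕ∞) (hU : IsOpen U) {K : Set E} (hK : IsCompact K)
    (hKU : K ⊆ U) :
    ∃ χ : E → ℝ, ContDiff ℝ n χ ∧ HasCompactSupport χ ∧ tsupport χ ⊆ U ∧ (∀ x, 0 ≤ χ x) ∧
      ∀ x ∈ K, χ x = 1 := by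
  obtain ⟨K', hK', hKK', hK'U⟩ := exists_compact_between hK hU hKU
  obtain ⟨χ, hχ, hrange, hsupp, hone⟩ := exists_contMDiff_support_eq_eq_one_iff (n := n)
    (modelWithCornersSelf ℝ E) isOpen_interior hK.isClosed hKK'
  have hsub : tsupport χ ⊆ K' := closure_minimal (hsupp.trans_subset interior_subset) hK'.isClosed
  exact ⟨χ, hχ.contDiff, hK'.of_isClosed_subset (isClosed_tsupport χ) hsub, hsub.trans hK'U,
    fun x ↦ (hrange (mem_range_self x)).1, fun x hx ↦ (hone x).1 hx⟩

theorem exists_contDiff_abs_sub_le_mul (n : ℕ∞) {φ χ : E → ℝ} (hφ : Continuous φ)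
    (hχ_nonneg : ∀ x, 0 ≤ χ x) (hχ_one : ∀ x ∈ tsupport φ, χ x = 1) {δ : ℝ} (hδ : 0 < δ) :
    ∃ ψ : E → ℝ, ContDiff ℝ n ψ ∧ tsupport ψ ⊆ tsupport φ ∧ ∀ x, |φ x - ψ x| ≤ δ * χ x := by
  obtain ⟨ψ, hψ, hdist, hsupp⟩ :=
    hφ.exists_contDiff_approx n (continuous_const (y := δ)) fun _ ↦ hδ
  refine ⟨ψ, hψ, closure_mono hsupp, fun x ↦ ?_⟩
  by_cases hx : x ∈ tsupport φ
  · rw [hχ_one x hx, mul_one, abs_sub_comm]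
    exact (hdist x).le
  · have hψx : ψ x = 0 := image_eq_zero_of_notMem_tsupport fun h ↦ hx (closure_mono hsupp h)
    simpa only [image_eq_zero_of_notMem_tsupport hx, hψx, sub_self, abs_zero] using
      mul_nonneg hδ.le (hχ_nonneg x)

variable [MeasurableSpace E] [BorelSpace E] {ι : Type*} {l : Filter ι} {μ : ι → Measure E}

theorem exists_tendsto_integral_contDiff (hU : IsOpen U)
    (hfin : ∀ K ⊆ U, IsCompact K → ∀ᶠ i in l, μ i K < ⊤)
    (hlim : ∀ φ : E → ℝ, ContDiff ℝ n φ → HasCompactSupport φ → tsupport φ ⊆ U →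
      (∀ x, 0 ≤ φ x) → ∃ L, Tendsto (fun i ↦ ∫ x, φ x ∂μ i) l (𝓝 L))
    {ψ : E → ℝ} (hψ : ContDiff ℝ n ψ) (hψ_supp : HasCompactSupport ψ) (hψU : tsupport ψ ⊆ U) :
    ∃ L, Tendsto (fun i ↦ ∫ x, ψ x ∂μ i) l (𝓝 L) := by
  obtain ⟨χ, hχ, hχ_supp, hχU, hχ_nonneg, hχ_one⟩ := exists_contDiff_cutoff n hU hψ_supp hψU
  obtain ⟨M, hM⟩ := hψ_supp.exists_bound_of_continuous hψ.continuous
  have hM_nonneg : 0 ≤ M := (norm_nonneg _).trans (hM 0)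
  have hnonneg (x : E) : 0 ≤ ψ x + M * χ x := by
    by_cases hx : x ∈ tsupport ψ
    · rw [hχ_one x hx]
      linarith [neg_le_of_abs_le (hM x)]
    · rw [image_eq_zero_of_notMem_tsupport hx, zero_add]
      exact mul_nonneg hM_nonneg (hχ_nonneg x)
  obtain ⟨Lχ, hLχ⟩ := hlim χ hχ hχ_supp hχU hχ_nonneg
  obtain ⟨L, hL⟩ := hlim (fun x ↦ ψ x + M * χ x) (hψ.add (contDiff_const.mul hχ))
    (hψ_supp.add hχ_supp.mul_left)
    ((tsupport_add ψ _).trans (union_subset hψU (tsupport_mul_subset_right.trans hχU))) hnonneg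
  refine ⟨L - M * Lχ, (hL.sub (hLχ.const_mul M)).congr' ?_⟩
  filter_upwards [hfin _ hψU hψ_supp, hfin _ hχU hχ_supp] with i hiψ hiχ
  rw [integral_add (integrable_of_measure_tsupport_lt_top hψ.continuous hψ_supp hiψ)
    ((integrable_of_measure_tsupport_lt_top hχ.continuous hχ_supp hiχ).const_mul M),
    integral_const_mul, add_sub_cancel_right]

theorem exists_tendsto_integral_continuous [l.NeBot] (hU : IsOpen U)
    (hfin : ∀ K ⊆ U, IsCompact K → ∀ᶠ i in l, μ i K < ⊤)
    (hlim : ∀ φ : E → ℝ, ContDiff ℝ n φ → HasCompactSupport φ → tsupport φ ⊆ U →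
      (∀ x, 0 ≤ φ x) → ∃ L, Tendsto (fun i ↦ ∫ x, φ x ∂μ i) l (𝓝 L))
    {φ : E → ℝ} (hφ : Continuous φ) (hφ_supp : HasCompactSupport φ) (hφU : tsupport φ ⊆ U) :
    ∃ L, Tendsto (fun i ↦ ∫ x, φ x ∂μ i) l (𝓝 L) := by
  obtain ⟨χ, hχ, hχ_supp, hχU, hχ_nonneg, hχ_one⟩ := exists_contDiff_cutoff n hU hφ_supp hφU
  obtain ⟨Lχ, hLχ⟩ := hlim χ hχ hχ_supp hχU hχ_nonneg
  refine exists_tendsto_of_eventually_dist_lt fun ε hε ↦ ?_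
  have hLχ_pos : 0 < |Lχ| + 1 := by positivity
  obtain ⟨ψ, hψ, hψφ, hdist⟩ := exists_contDiff_abs_sub_le_mul n hφ hχ_nonneg hχ_one
    (div_pos (half_pos hε) hLχ_pos)
  have hψ_supp : HasCompactSupport ψ := hφ_supp.of_isClosed_subset (isClosed_tsupport ψ) hψφ
  obtain ⟨L, hL⟩ := exists_tendsto_integral_contDiff hU hfin hlim hψ hψ_supp (hψφ.trans hφU)
  refine ⟨L, ?_⟩
  filter_upwards [hL.eventually (Metric.ball_mem_nhds L (half_pos hε)),
    hLχ.eventually (gt_mem_nhds (by linarith [le_abs_self Lχ] : Lχ < |Lχ| + 1)),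
    hfin _ hφU hφ_supp, hfin _ (hψφ.trans hφU) hψ_supp, hfin _ hχU hχ_supp]
    with i hiL hiχ hφi hψi hχi
  have happrox : dist (∫ x, φ x ∂μ i) (∫ x, ψ x ∂μ i) ≤ ε / 2 :=
    calc dist (∫ x, φ x ∂μ i) (∫ x, ψ x ∂μ i) ≤ ε / 2 / (|Lχ| + 1) * ∫ x, χ x ∂μ i :=
          dist_integral_le_mul_integral (integrable_of_measure_tsupport_lt_top hφ hφ_supp hφi)
            (integrable_of_measure_tsupport_lt_top hψ.continuous hψ_supp hψi)
            (integrable_of_measure_tsupport_lt_top hχ.continuous hχ_supp hχi) hdist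
      _ ≤ ε / 2 / (|Lχ| + 1) * (|Lχ| + 1) := by gcongr
      _ = ε / 2 := div_mul_cancel₀ _ hLχ_pos.ne'
  calc dist (∫ x, φ x ∂μ i) L ≤ dist (∫ x, φ x ∂μ i) (∫ x, ψ x ∂μ i) + dist (∫ x, ψ x ∂μ i) L :=
        dist_triangle _ _ _
    _ < ε / 2 + ε / 2 := add_lt_add_of_le_of_lt happrox hiL
    _ = ε := add_halves ε

end SmoothTestFunctions

theorem isCompact_preimage_subtype_val {X : Type*} [TopologicalSpace X] {U K : Set X} (hKU : K ⊆ U)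
    (hK : IsCompact K) : IsCompact (Subtype.val ⁻¹' K : Set U) :=
  (Topology.IsInducing.subtypeVal.isCompact_preimage_iff
    (by simpa only [Subtype.range_coe] using hKU)).2 hK

theorem hasCompactSupport_comp_subtype_val {X : Type*} [TopologicalSpace X] [R1Space X] {U : Set X}
    {φ : X → ℝ} (hφ : HasCompactSupport φ) (hφU : tsupport φ ⊆ U) :
    HasCompactSupport fun x : U ↦ φ x :=
  .of_support_subset_isCompact (isCompact_preimage_subtype_val hφU hφ) fun _ hx ↦
    subset_tsupport φ hx

theorem integral_comap_subtype_val {X : Type*} [TopologicalSpace X] [MeasurableSpace X] {U : Set X}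
    {φ : X → ℝ} (hU : MeasurableSet U) (hφU : tsupport φ ⊆ U) (μ : Measure X) :
    ∫ x : U, φ x ∂μ.comap Subtype.val = ∫ x, φ x ∂μ := by
  rw [integral_subtype_comap hU]
  exact setIntegral_eq_integral_of_forall_compl_eq_zero fun x hx ↦
    image_eq_zero_of_notMem_tsupport fun h ↦ hx (hφU h)

variable {X ι : Type*} [TopologicalSpace X] [T2Space X] [LocallyCompactSpace X] [MeasurableSpace X]
  [BorelSpace X] {l : Filter ι} [l.NeBot] {μ : ι → Measure X}

theorem exists_measure_tendsto_integral (hfin : ∀ K, IsCompact K → ∀ᶠ i in l, μ i K < ⊤)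
    (hlim : ∀ f : C_c(X, ℝ), ∃ L, Tendsto (fun i ↦ ∫ x, f x ∂μ i) l (𝓝 L)) :
    ∃ ν : Measure X, IsFiniteMeasureOnCompacts ν ∧
      ∀ f : C_c(X, ℝ), Tendsto (fun i ↦ ∫ x, f x ∂μ i) l (𝓝 (∫ x, f x ∂ν)) := by
  choose Λ hΛ using hlim
  have hint (f : C_c(X, ℝ)) : ∀ᶠ i in l, Integrable f (μ i) :=
    (hfin _ f.hasCompactSupport).mono fun i ↦
      integrable_of_measure_tsupport_lt_top f.continuous f.hasCompactSupport
  let Λlin : C_c(X, ℝ) →ₗ[ℝ] ℝ :=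
    { toFun := Λ
      map_add' f g := by
        refine tendsto_nhds_unique (hΛ (f + g)) (((hΛ f).add (hΛ g)).congr' ?_)
        filter_upwards [hint f, hint g] with i hf hg using (integral_add hf hg).symm
      map_smul' c f := tendsto_nhds_unique (hΛ (c • f)) <|
        ((hΛ f).const_mul c).congr fun i ↦ (integral_const_mul c _).symm }
  let Λpos : C_c(X, ℝ) →ₚ[ℝ] ℝ := PositiveLinearMap.mk₀ Λlin fun f hf ↦
    ge_of_tendsto' (hΛ f) fun i ↦ integral_nonneg hf
  refine ⟨RealRMK.rieszMeasure Λpos, inferInstance, fun f ↦ ?_⟩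
  rw [RealRMK.integral_rieszMeasure]
  exact hΛ f

theorem exists_measure_tendsto_integral_of_isOpen {U : Set X} (hU : IsOpen U)
    (hfin : ∀ K ⊆ U, IsCompact K → ∀ᶠ i in l, μ i K < ⊤)
    (hlim : ∀ φ : X → ℝ, Continuous φ → HasCompactSupport φ → tsupport φ ⊆ U →
      ∃ L, Tendsto (fun i ↦ ∫ x, φ x ∂μ i) l (𝓝 L)) :
    ∃ ν : Measure X, ν Uᶜ = 0 ∧ (∀ K ⊆ U, IsCompact K → ν K < ⊤) ∧
      ∀ φ : X → ℝ, Continuous φ → HasCompactSupport φ → tsupport φ ⊆ U →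
        Tendsto (fun i ↦ ∫ x, φ x ∂μ i) l (𝓝 (∫ x, φ x ∂ν)) := by
  have : LocallyCompactSpace U := hU.locallyCompactSpace
  have hval : MeasurableEmbedding (Subtype.val : U → X) := .subtype_coe hU.measurableSet
  have hfin_comap (K : Set U) (hK : IsCompact K) :
      ∀ᶠ i in l, (μ i).comap Subtype.val K < ⊤ := by
    simpa only [hval.comap_apply] using
      hfin _ (Subtype.coe_image_subset U K) (hK.image continuous_subtype_val)
  have hlim_comap (f : C_c(U, ℝ)) :
      ∃ L, Tendsto (fun i ↦ ∫ x, f x ∂(μ i).comap Subtype.val) l (𝓝 L) := by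
    have hext_supp : tsupport (Function.extend Subtype.val f 0) ⊆ U :=
      (f.hasCompactSupport.tsupport_extend_zero_subset continuous_subtype_val).trans
        (Subtype.coe_image_subset _ _)
    obtain ⟨L, hL⟩ := hlim _ (f.hasCompactSupport.continuous_extend_zero hU f.continuous)
      (f.hasCompactSupport.extend_zero continuous_subtype_val) hext_supp
    refine ⟨L, hL.congr fun i ↦ ?_⟩
    have hcomap := integral_comap_subtype_val hU.measurableSet hext_supp (μ i)
    simp only [Subtype.val_injective.extend_apply] at hcomap
    exact hcomap.symm
  obtain ⟨ν, hν, hνlim⟩ := exists_measure_tendsto_integral hfin_comap hlim_comap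
  refine ⟨ν.map Subtype.val, ?_, fun K hKU hK ↦ ?_, fun φ hφ hφ_supp hφU ↦ ?_⟩
  · simp [hval.map_apply]
  · rw [hval.map_apply]
    exact (isCompact_preimage_subtype_val hKU hK).measure_lt_top
  · have hφlim := hνlim ⟨⟨fun x ↦ φ x, hφ.comp continuous_subtype_val⟩,
      hasCompactSupport_comp_subtype_val hφ_supp hφU⟩
    rw [hval.integral_map]
    exact hφlim.congr fun i ↦ integral_comap_subtype_val hU.measurableSet hφU (μ i)

end VagueLimit

section Laplacian

theorem contDiff_fderiv_apply {E F : Type*} [NormedAddCommGroup E] [NormedSpace ℝ E]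
    [NormedAddCommGroup F] [NormedSpace ℝ F] {f : E → F} {m n : ℕ∞} (hf : ContDiff ℝ n f)
    (hmn : m + 1 ≤ n) (v : E) :
    ContDiff ℝ m fun y ↦ fderiv ℝ f y v :=
  (hf.fderiv_right (mod_cast hmn)).clm_apply contDiff_const

variable {N : ℕ} {φ : Euc N → ℝ}

theorem continuous_lap (hφ : ContDiff ℝ 2 φ) : Continuous (lap φ) :=
  continuous_finsetSum _ fun i _ ↦
    ((contDiff_fderiv_apply (m := 1) hφ (by norm_num) _).continuous_fderiv one_ne_zero).clm_apply
      continuous_const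

theorem lap_mul_const (hφ : ContDiff ℝ 2 φ) (c : ℝ) (x : Euc N) :
    lap (fun y ↦ φ y * c) x = lap φ x * c := by
  have hfst (v y : Euc N) : fderiv ℝ (fun y ↦ φ y * c) y v = fderiv ℝ φ y v * c := by
    rw [fderiv_mul_const (hφ.differentiable two_ne_zero y), smul_apply,
      smul_eq_mul, mul_comm]
  have hsnd (v : Euc N) : fderiv ℝ (fun y ↦ fderiv ℝ φ y v * c) x v =
      fderiv ℝ (fun y ↦ fderiv ℝ φ y v) x v * c := by
    have hdiff := (contDiff_fderiv_apply (m := 1) hφ (by norm_num) v).differentiable one_ne_zero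
    rw [fderiv_mul_const (hdiff x), smul_apply, smul_eq_mul, mul_comm]
  simp only [lap, hfst, hsnd, Finset.sum_mul]

theorem lap_eq_zero_of_notMem_tsupport {x : Euc N} (hx : x ∉ tsupport φ) : lap φ x = 0 := by
  have hφ : φ =ᶠ[𝓝 x] 0 := notMem_tsupport_iff_eventuallyEq.1 hx
  refine Finset.sum_eq_zero fun i _ ↦ ?_
  have hfst : (fun y ↦ fderiv ℝ φ y (EuclideanSpace.single i 1)) =ᶠ[𝓝 x] 0 :=
    (hφ.fderiv (𝕜 := ℝ)).mono fun y hy ↦ by simp [hy]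
  rw [hfst.fderiv_eq]
  simp

theorem c21_mul {η : ℝ → ℝ} (hφ : ContDiff ℝ 2 φ) (hη : ContDiff ℝ 1 η) :
    C21 fun x t ↦ φ x * η t := by
  have hφ_fst : Continuous fun p : Euc N × ℝ ↦ φ p.1 := hφ.continuous.comp continuous_fst
  have hη_snd : Continuous fun p : Euc N × ℝ ↦ η p.2 := hη.continuous.comp continuous_snd
  have hφ_diff : Differentiable ℝ φ := hφ.differentiable two_ne_zero
  have hφ' : ContDiff ℝ 1 (fderiv ℝ φ) := hφ.fderiv_right le_rfl
  have hφ'_diff : Differentiable ℝ (fderiv ℝ φ) := hφ'.differentiable one_ne_zero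
  have hη_diff : Differentiable ℝ η := hη.differentiable one_ne_zero
  have hderiv (x : Euc N) (t : ℝ) : deriv (fun t ↦ φ x * η t) t = φ x * deriv η t :=
    deriv_const_mul _ (hη_diff t)
  have hfderiv (x : Euc N) (t : ℝ) : fderiv ℝ (fun y ↦ φ y * η t) x = η t • fderiv ℝ φ x :=
    fderiv_mul_const (hφ_diff x) (η t)
  have hfderiv₂ (x : Euc N) (t : ℝ) :
      fderiv ℝ (fun y ↦ η t • fderiv ℝ φ y) x = η t • fderiv ℝ (fderiv ℝ φ) x :=
    fderiv_fun_const_smul (hφ'_diff x) (η t)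
  simp only [C21, hderiv, hfderiv, hfderiv₂]
  exact ⟨hφ_fst.mul hη_snd, fun x t ↦ (hη_diff t).const_mul _,
    hφ_fst.mul ((hη.continuous_deriv le_rfl).comp continuous_snd),
    fun t x ↦ (hφ_diff x).mul_const _, hη_snd.smul (hφ'.continuous.comp continuous_fst),
    fun t x ↦ (hφ'_diff x).const_smul (η t),
    hη_snd.smul ((hφ'.continuous_fderiv one_ne_zero).comp continuous_fst)⟩

end Laplacian

section ProductIntegrals

theorem tsupport_mul_prod_subset {X Y : Type*} [TopologicalSpace X] [TopologicalSpace Y]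
    (φ : X → ℝ) (η : Y → ℝ) :
    tsupport (fun p : X × Y ↦ φ p.1 * η p.2) ⊆ tsupport φ ×ˢ tsupport η :=
  closure_minimal (fun _ hp ↦ ⟨subset_closure (left_ne_zero_of_mul hp),
    subset_closure (right_ne_zero_of_mul hp)⟩) ((isClosed_tsupport φ).prod (isClosed_tsupport η))

theorem integrableOn_prod_mul_fst {X Y : Type*} [TopologicalSpace X] [MeasurableSpace X]
    [OpensMeasurableSpace X] [MeasurableSpace Y] {μ : Measure (X × Y)} {v : X × Y → ℝ} {c : X → ℝ}
    {K s : Set X} {I : Set Y} (hK : IsCompact K) (hv : IntegrableOn v (K ×ˢ I) μ)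
    (hs : MeasurableSet s) (hI : MeasurableSet I)
    (hc : Continuous c) (hcK : ∀ x ∉ K, c x = 0) :
    IntegrableOn (fun p ↦ v p * c p.1) (s ×ˢ I) μ := by
  obtain ⟨C, hC⟩ := hK.exists_bound_of_continuousOn hc.continuousOn
  have hbound (x : X) : ‖c x‖ ≤ max C 0 := by
    by_cases hx : x ∈ K
    · exact le_max_of_le_left (hC x hx)
    · simp [hcK x hx]
  refine IntegrableOn.of_forall_sdiff_eq_zero (s := K ×ˢ I) ?_ (hs.prod hI) fun p hp ↦ ?_
  · exact hv.mul_bdd (hc.measurable.comp measurable_fst).aestronglyMeasurable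
      (Eventually.of_forall fun p ↦ hbound p.1)
  · rw [hcK p.1 fun h ↦ hp.2 ⟨h, hp.1.2⟩, mul_zero]

theorem integrable_mul_snd {X Y : Type*} [MeasurableSpace X] [TopologicalSpace Y]
    [MeasurableSpace Y] [OpensMeasurableSpace Y] {μ : Measure (X × Y)} {A : X × Y → ℝ}
    (hA : Integrable A μ) {k : Y → ℝ} (hk : Continuous k) (hk_supp : HasCompactSupport k) :
    Integrable (fun p ↦ A p * k p.2) μ := by
  obtain ⟨C, hC⟩ := hk_supp.exists_bound_of_continuous hk
  exact hA.mul_bdd (hk.measurable.comp measurable_snd).aestronglyMeasurable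
    (Eventually.of_forall fun p ↦ hC p.2)

theorem integral_prod_mul_snd {X Y : Type*} [MeasurableSpace X] [MeasurableSpace Y] {μ : Measure X}
    {ν : Measure Y} [SFinite μ] [SFinite ν] {A : X × Y → ℝ} {k : Y → ℝ}
    (h : Integrable (fun p ↦ A p * k p.2) (μ.prod ν)) :
    ∫ p, A p * k p.2 ∂μ.prod ν = ∫ y, (∫ x, A (x, y) ∂μ) * k y ∂ν := by
  simp only [integral_prod_symm _ h, integral_mul_const]

variable {X Y : Type*} [MeasureSpace X] [MeasureSpace Y] [SFinite (volume : Measure X)]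
  [SFinite (volume : Measure Y)] {v : X × Y → ℝ} {s : Set X} {I : Set Y}

theorem volume_restrict_prod (s : Set X) (I : Set Y) :
    (volume : Measure (X × Y)).restrict (s ×ˢ I) =
      (volume.restrict s).prod (volume.restrict I) := by
  rw [Measure.prod_restrict, Measure.volume_eq_prod]

theorem ae_restrict_integrableOn_slice (hv : IntegrableOn v (s ×ˢ I)) :
    ∀ᵐ t ∂volume.restrict I, IntegrableOn (fun x ↦ v (x, t)) s := by
  rw [IntegrableOn, volume_restrict_prod] at hv
  exact hv.prod_left_ae

theorem integrableOn_setIntegral_slice (hv : IntegrableOn v (s ×ˢ I)) :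
    IntegrableOn (fun t ↦ ∫ x in s, v (x, t)) I := by
  rw [IntegrableOn, volume_restrict_prod] at hv
  exact hv.integral_prod_right

theorem setIntegral_prod_mul_snd [TopologicalSpace Y] [OpensMeasurableSpace Y]
    (hv : IntegrableOn v (s ×ˢ I)) {k : Y → ℝ} (hk : Continuous k) (hk_supp : HasCompactSupport k) :
    ∫ p in s ×ˢ I, v p * k p.2 = ∫ t in I, (∫ x in s, v (x, t)) * k t := by
  rw [IntegrableOn] at hv
  rw [volume_restrict_prod] at hv ⊢
  exact integral_prod_mul_snd (integrable_mul_snd hv hk hk_supp)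

end ProductIntegrals

section Supersolution

variable {N : ℕ} {Ω : Set (Euc N)} {T : ℝ} {u h : Euc N × ℝ → ℝ} {φ : Euc N → ℝ}

/-- `∂_t u − Δu + h ≥ 0` in `Q_T` in the sense of distributions. A supersolution of
`∂_t u − Δu + g(u) = 0` is the case `h = g ∘ u`. -/
def IsSupersolution (Ω : Set (Euc N)) (T : ℝ) (u h : Euc N × ℝ → ℝ) : Prop :=
  ∀ ζ : Euc N → ℝ → ℝ, C21 ζ → HasCompactSupport (fun p : Euc N × ℝ ↦ ζ p.1 p.2) →
    tsupport (fun p : Euc N × ℝ ↦ ζ p.1 p.2) ⊆ QT Ω T → (∀ x t, 0 ≤ ζ x t) →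
    0 ≤ ∫ p in QT Ω T,
      (-(u p) * deriv (ζ p.1) p.2 - u p * lap (fun y ↦ ζ y p.2) p.1 + ζ p.1 p.2 * h p)

theorem IsSupersolution.setIntegral_mul_le (H : IsSupersolution Ω T u h) (hφ : ContDiff ℝ 2 φ)
    (hφ_supp : HasCompactSupport φ) (hφΩ : tsupport φ ⊆ Ω) (hφ_nonneg : ∀ x, 0 ≤ φ x) {η : ℝ → ℝ}
    (hη : ContDiff ℝ 1 η) (hη_supp : HasCompactSupport η) (hηT : tsupport η ⊆ Ioo 0 T)
    (hη_nonneg : ∀ t, 0 ≤ η t)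
    (hA : IntegrableOn (fun p ↦ u p * φ p.1) (Ω ×ˢ Ioo 0 T))
    (hB : IntegrableOn (fun p ↦ u p * lap φ p.1 - h p * φ p.1) (Ω ×ˢ Ioo 0 T)) :
    ∫ p in Ω ×ˢ Ioo 0 T, u p * φ p.1 * deriv η p.2 ≤
      -∫ p in Ω ×ˢ Ioo 0 T, (u p * lap φ p.1 - h p * φ p.1) * η p.2 := by
  have hsupp := tsupport_mul_prod_subset φ η
  have htest := H (fun x t ↦ φ x * η t) (c21_mul hφ hη)
    ((hφ_supp.prod hη_supp).of_isClosed_subset (isClosed_tsupport _) hsupp)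
    (hsupp.trans (prod_mono hφΩ hηT)) fun x t ↦ mul_nonneg (hφ_nonneg x) (hη_nonneg t)
  have hintegrand (p : Euc N × ℝ) :
      -(u p) * deriv (fun t ↦ φ p.1 * η t) p.2 - u p * lap (fun y ↦ φ y * η p.2) p.1 +
          φ p.1 * η p.2 * h p =
        -(u p * φ p.1 * deriv η p.2 + (u p * lap φ p.1 - h p * φ p.1) * η p.2) := by
    rw [deriv_const_mul _ (hη.differentiable one_ne_zero p.2), lap_mul_const hφ]
    ring
  simp only [hintegrand, QT] at htest
  rw [integral_neg, integral_add
    (integrable_mul_snd hA (hη.continuous_deriv le_rfl) hη_supp.deriv)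
    (integrable_mul_snd hB hη.continuous hη_supp)] at htest
  linarith

theorem IsSupersolution.weakDerivGE (H : IsSupersolution Ω T u h) (hφ : ContDiff ℝ 2 φ)
    (hφ_supp : HasCompactSupport φ) (hφΩ : tsupport φ ⊆ Ω) (hφ_nonneg : ∀ x, 0 ≤ φ x)
    (hA : IntegrableOn (fun p ↦ u p * φ p.1) (Ω ×ˢ Ioo 0 T))
    (hB : IntegrableOn (fun p ↦ u p * lap φ p.1 - h p * φ p.1) (Ω ×ˢ Ioo 0 T)) :
    WeakDerivGE (fun t ↦ ∫ x in Ω, u (x, t) * φ x)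
      (fun t ↦ ∫ x in Ω, (u (x, t) * lap φ x - h (x, t) * φ x)) 0 T := by
  intro η hη hη_supp hηT hη_nonneg
  have hle := H.setIntegral_mul_le hφ hφ_supp hφΩ hφ_nonneg hη hη_supp hηT hη_nonneg hA hB
  rwa [setIntegral_prod_mul_snd hA (hη.continuous_deriv le_rfl) hη_supp.deriv,
    setIntegral_prod_mul_snd hB hη.continuous hη_supp] at hle

theorem IsSupersolution.exists_tendsto_setIntegral_mul (H : IsSupersolution Ω T u h)
    (hΩ : IsOpen Ω) (hT : 0 < T)
    (hu : ∀ K ⊆ Ω, IsCompact K → IntegrableOn u (K ×ˢ Ioo 0 T))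
    (hh : ∀ K ⊆ Ω, IsCompact K → IntegrableOn h (K ×ˢ Ioo 0 T))
    (hu_nonneg : ∀ p ∈ QT Ω T, 0 ≤ u p) (hφ : ContDiff ℝ 2 φ) (hφ_supp : HasCompactSupport φ)
    (hφΩ : tsupport φ ⊆ Ω) (hφ_nonneg : ∀ x, 0 ≤ φ x) :
    ∃ L, Tendsto (fun t ↦ ∫ x in Ω, u (x, t) * φ x) (essNhdsGT 0) (𝓝 L) := by
  have hmul {v : Euc N × ℝ → ℝ} {c : Euc N → ℝ}
      (hv : ∀ K ⊆ Ω, IsCompact K → IntegrableOn v (K ×ˢ Ioo 0 T)) (hc : Continuous c)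
      (hcφ : ∀ x ∉ tsupport φ, c x = 0) : IntegrableOn (fun p ↦ v p * c p.1) (Ω ×ˢ Ioo 0 T) :=
    integrableOn_prod_mul_fst hφ_supp (hv _ hφΩ hφ_supp) hΩ.measurableSet measurableSet_Ioo hc hcφ
  have hφ_zero (x : Euc N) : x ∉ tsupport φ → φ x = 0 := image_eq_zero_of_notMem_tsupport
  have hA := hmul hu hφ.continuous hφ_zero
  have hB := (hmul hu (continuous_lap hφ) fun x ↦ lap_eq_zero_of_notMem_tsupport).sub
    (hmul hh hφ.continuous hφ_zero)
  exact (H.weakDerivGE hφ hφ_supp hφΩ hφ_nonneg hA hB).exists_tendsto_essNhdsGT hT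
    (integrableOn_setIntegral_slice hA) (integrableOn_setIntegral_slice hB) fun t ht ↦
      setIntegral_nonneg hΩ.measurableSet fun x hx ↦ mul_nonneg (hu_nonneg _ ⟨hx, ht⟩) (hφ_nonneg x)

/-- The positive measure `u(·, t) dx` on `Ω`. Truncating the density at `0` is harmless because it
is used for `u ≥ 0` only. -/
def sliceMeasure (Ω : Set (Euc N)) (u : Euc N × ℝ → ℝ) (t : ℝ) : Measure (Euc N) :=
  (volume.restrict Ω).withDensity fun x ↦ ENNReal.ofReal (u (x, t))

theorem sliceMeasure_lt_top {K : Set (Euc N)} {t : ℝ} (hK : MeasurableSet K) (hKΩ : K ⊆ Ω)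
    (hu : IntegrableOn (fun x ↦ u (x, t)) K) : sliceMeasure Ω u t K < ⊤ := by
  rw [sliceMeasure, withDensity_apply _ hK, Measure.restrict_restrict hK, inter_eq_left.2 hKΩ]
  exact hu.lintegral_lt_top

theorem integral_sliceMeasure {t : ℝ} (hΩ : MeasurableSet Ω) (hφΩ : tsupport φ ⊆ Ω)
    (hu : IntegrableOn (fun x ↦ u (x, t)) (tsupport φ)) (hu_nonneg : ∀ x ∈ Ω, 0 ≤ u (x, t)) :
    ∫ x, φ x ∂sliceMeasure Ω u t = ∫ x in Ω, u (x, t) * φ x := by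
  have hK : MeasurableSet (tsupport φ) := (isClosed_tsupport φ).measurableSet
  have hrestrict : (volume.restrict Ω).restrict (tsupport φ) = volume.restrict (tsupport φ) := by
    rw [Measure.restrict_restrict hK, inter_eq_left.2 hφΩ]
  calc ∫ x, φ x ∂sliceMeasure Ω u t = ∫ x in tsupport φ, φ x ∂sliceMeasure Ω u t :=
        (setIntegral_eq_integral_of_forall_compl_eq_zero fun x ↦
          image_eq_zero_of_notMem_tsupport).symm
    _ = ∫ x in tsupport φ, (ENNReal.ofReal (u (x, t))).toReal • φ x := by
        rw [sliceMeasure, setIntegral_withDensity_eq_setIntegral_toReal_smul₀ _ _ _ hK, hrestrict]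
        · rw [hrestrict]
          exact hu.1.aemeasurable.ennreal_ofReal
        · exact Eventually.of_forall fun x ↦ ENNReal.ofReal_lt_top
    _ = ∫ x in tsupport φ, u (x, t) * φ x := setIntegral_congr_fun hK fun x hx ↦ by
        simp only [ENNReal.toReal_ofReal (hu_nonneg x (hφΩ hx)), smul_eq_mul]
    _ = ∫ x in Ω, u (x, t) * φ x := (setIntegral_eq_of_subset_of_forall_sdiff_eq_zero hΩ hφΩ
        fun x hx ↦ by rw [image_eq_zero_of_notMem_tsupport hx.2, mul_zero]).symm

theorem eventually_sliceMeasure_lt_top (hT : 0 < T) {K : Set (Euc N)} (hK : MeasurableSet K)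
    (hKΩ : K ⊆ Ω) (hu : IntegrableOn u (K ×ˢ Ioo 0 T)) :
    ∀ᶠ t in essNhdsGT 0, sliceMeasure Ω u t K < ⊤ :=
  ((ae_restrict_integrableOn_slice hu).filter_mono (essNhdsGT_le_ae_restrict_Ioo hT)).mono fun _ ↦
    sliceMeasure_lt_top hK hKΩ

theorem eventually_integral_sliceMeasure (hT : 0 < T) (hΩ : MeasurableSet Ω)
    (hφΩ : tsupport φ ⊆ Ω) (hu : IntegrableOn u (tsupport φ ×ˢ Ioo 0 T))
    (hu_nonneg : ∀ p ∈ QT Ω T, 0 ≤ u p) :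
    ∀ᶠ t in essNhdsGT 0, ∫ x, φ x ∂sliceMeasure Ω u t = ∫ x in Ω, u (x, t) * φ x :=
  essNhdsGT_le_ae_restrict_Ioo hT <| by
    filter_upwards [ae_restrict_integrableOn_slice hu, ae_restrict_mem measurableSet_Ioo]
      with t hut ht
    exact integral_sliceMeasure hΩ hφΩ hut fun x hx ↦ hu_nonneg _ ⟨hx, ht⟩

end Supersolution

theorem stmt_1_general {N : ℕ} {Ω : Set (Euc N)} (hΩ : IsOpen Ω) {T : ℝ} (hT : 0 < T)
    {u h : Euc N × ℝ → ℝ} (hu : ∀ K ⊆ Ω, IsCompact K → IntegrableOn u (K ×ˢ Ioo 0 T))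
    (hu_nonneg : ∀ p ∈ QT Ω T, 0 ≤ u p)
    (hh : ∀ K ⊆ Ω, IsCompact K → IntegrableOn h (K ×ˢ Ioo 0 T)) (H : IsSupersolution Ω T u h) :
    ∃ ν : Measure (Euc N), RadonOn Ω ν ∧ InitTraceOn Ω Ω u ν := by
  have hfin (K : Set (Euc N)) (hKΩ : K ⊆ Ω) (hK : IsCompact K) :
      ∀ᶠ t in essNhdsGT 0, sliceMeasure Ω u t K < ⊤ :=
    eventually_sliceMeasure_lt_top hT hK.measurableSet hKΩ (hu K hKΩ hK)
  have hint {φ : Euc N → ℝ} (hφ_supp : HasCompactSupport φ) (hφΩ : tsupport φ ⊆ Ω) :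
      ∀ᶠ t in essNhdsGT 0, ∫ x, φ x ∂sliceMeasure Ω u t = ∫ x in Ω, u (x, t) * φ x :=
    eventually_integral_sliceMeasure hT hΩ.measurableSet hφΩ (hu _ hφΩ hφ_supp) hu_nonneg
  obtain ⟨ν, hν, hν_fin, hν_lim⟩ := exists_measure_tendsto_integral_of_isOpen hΩ hfin
    fun φ ↦ exists_tendsto_integral_continuous (n := 2) hΩ hfin
      fun ψ hψ hψ_supp hψΩ hψ_nonneg ↦
        (H.exists_tendsto_setIntegral_mul hΩ hT hu hh hu_nonneg hψ hψ_supp hψΩ hψ_nonneg).imp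
          fun L ↦ (tendsto_congr' (hint hψ_supp hψΩ)).2
  exact ⟨ν, ⟨hν, hν_fin⟩, fun φ hφ hφ_supp hφΩ ↦
    (hν_lim φ hφ hφ_supp hφΩ).congr' (hint hφ_supp hφΩ)⟩

/-- **Proposition 2.6.** A nonnegative `L¹` supersolution of
`∂_t u − Δu + g(u) = 0` in `Q_T` with `g∘u ∈ L¹(Q_T)` admits an initial trace
which is a positive Radon measure on `Ω`. -/
theorem stmt_1 {N : ℕ} (hN : 1 ≤ N) (Ω : Set (Euc N)) (hΩo : IsOpen Ω)
    (hΩc : IsConnected Ω) (hΩb : Bornology.IsBounded Ω) (T : ℝ) (hT : 0 < T)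
    (g : ℝ → ℝ) (hg : GoodG g) (u : Euc N × ℝ → ℝ)
    (hu_int : IntegrableOn u (QT Ω T))
    (hu_nonneg : ∀ p ∈ QT Ω T, 0 ≤ u p)
    (hgu_int : IntegrableOn (fun p => g (u p)) (QT Ω T))
    (hsuper : ∀ ζ : Euc N → ℝ → ℝ, C21 ζ →
      HasCompactSupport (fun p : Euc N × ℝ => ζ p.1 p.2) →
      tsupport (fun p : Euc N × ℝ => ζ p.1 p.2) ⊆ QT Ω T →
      (∀ x t, 0 ≤ ζ x t) →
      0 ≤ ∫ p in QT Ω T,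
        (-(u p) * deriv (ζ p.1) p.2 - u p * lap (fun y => ζ y p.2) p.1 + ζ p.1 p.2 * g (u p))) :
    ∃ ν : Measure (Euc N), RadonOn Ω ν ∧ InitTraceOn Ω Ω u ν := by
  exact stmt_1_general hΩo hT (fun _ hK _ ↦ hu_int.mono_set (prod_mono_left hK)) hu_nonneg
    (fun _ hK _ ↦ hgu_int.mono_set (prod_mono_left hK)) hsuper
end
end
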